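/- arXiv:1804.11016 — 2 statements merged into one kernel-verified Lean document; each statement's English description precedes it below -/
import Mathlib

section
/- For every m ∈ ℕ with m ≥ 1 and every closed interval I = [b₁,b₂] ⊆ [0,1] with rational endpoints, the set B_{m,I} = ⋃_{n∈ℕ} A_{n,m,I} is open and dense in the metric space (F_(C,β), d_α). -/
open MeasureTheory Set Filter Topology
open scoped ENNReal

noncomputable section

/-- The unit square `M = [0,1]²`. -/
def MSq : Set (ℝ × ℝ) := unitInterval ×ˢ unitInterval

/-- Lower `(C,γ)`-bi-Hölder bound in the second variable. -/
def BiHolderLower (C γ : ℝ) (f : ℝ → ℝ → ℝ) : Prop :=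
  ∀ x ∈ unitInterval, ∀ y₁ ∈ unitInterval, ∀ y₂ ∈ unitInterval, y₁ ≠ y₂ →
    C⁻¹ * |y₂ - y₁| ^ (1 / γ) ≤ |f x y₂ - f x y₁|

/-- Upper `(C,γ)`-Hölder bound in the second variable. -/
def BiHolderUpper (C γ : ℝ) (f : ℝ → ℝ → ℝ) : Prop :=
  ∀ x ∈ unitInterval, ∀ y₁ ∈ unitInterval, ∀ y₂ ∈ unitInterval, y₁ ≠ y₂ →
    |f x y₂ - f x y₁| ≤ C * |y₂ - y₁| ^ γ

/-- Membership in the space `F_(C,γ)`: conditions (i)–(iv); `fx` plays the role of `∂f/∂x`. -/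
structure IsFol (C γ : ℝ) (f fx : ℝ → ℝ → ℝ) : Prop where
  mapsTo : ∀ x ∈ unitInterval, ∀ y ∈ unitInterval, f x y ∈ unitInterval
  hasDeriv : ∀ y ∈ unitInterval, ∀ x ∈ unitInterval,
    HasDerivWithinAt (fun x' => f x' y) (fx x y) unitInterval x
  derivCont : ContinuousOn (fun p : ℝ × ℝ => fx p.1 p.2) MSq
  eq_id : ∀ y ∈ unitInterval, f 0 y = y
  eq_bot : ∀ x ∈ unitInterval, f x 0 = 0
  eq_top : ∀ x ∈ unitInterval, f x 1 = 1
  lower : BiHolderLower C γ f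
  upper : BiHolderUpper C γ f

/-- The space `F_(C,γ)`. -/
structure Fol (C γ : ℝ) where
  f : ℝ → ℝ → ℝ
  fx : ℝ → ℝ → ℝ
  isFol : IsFol C γ f fx

/-- The inverse of `y ↦ f x y` on `[0,1]`, i.e. the holonomy `h^f_{x,0}`. -/
def hinv (f : ℝ → ℝ → ℝ) (x : ℝ) : ℝ → ℝ := Function.invFunOn (f x) unitInterval

/-- The `C⁰` distance over the square. -/
def C0dist (u v : ℝ → ℝ → ℝ) : ℝ :=
  sSup {r | ∃ x ∈ unitInterval, ∃ y ∈ unitInterval, r = |u x y - v x y|}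

/-- The `α`-Hölder seminorm of the difference `h - k` on `[0,1]`. -/
def holDist (α : ℝ) (h k : ℝ → ℝ) : ℝ :=
  sSup {r | ∃ y₁ ∈ unitInterval, ∃ y₂ ∈ unitInterval, y₁ ≠ y₂ ∧
    r = |(h y₂ - k y₂) - (h y₁ - k y₁)| / |y₂ - y₁| ^ α}

/-- The distance `d_α`, on raw data `(f, ∂f/∂x)`, `(g, ∂g/∂x)`. -/
def dalpha (α : ℝ) (f fx g gx : ℝ → ℝ → ℝ) : ℝ :=
  C0dist f g + C0dist fx gx +
    sSup {r | ∃ x ∈ unitInterval,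
      r = max (holDist α (f x) (g x)) (holDist α (hinv f x) (hinv g x))}

/-- The distance `d_α` on `F_(C,γ)`. -/
def dalphaF {C γ : ℝ} (α : ℝ) (F G : Fol C γ) : ℝ := dalpha α F.f F.fx G.f G.fx

/-- Openness with respect to a distance function. -/
def IsOpenWrt {X : Type*} (d : X → X → ℝ) (s : Set X) : Prop :=
  ∀ f ∈ s, ∃ ε > 0, ∀ g, d g f < ε → g ∈ s

/-- Density with respect to a distance function. -/
def IsDenseWrt {X : Type*} (d : X → X → ℝ) (s : Set X) : Prop :=
  ∀ f : X, ∀ ε > 0, ∃ g ∈ s, d g f < ε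

/-- Lebesgue measure `μ` on the unit square `M`. -/
def muM : Measure (ℝ × ℝ) := volume.restrict MSq

/-- The projection `π_f(x,z) = f(x,·)⁻¹(z)` along the leaves. -/
def projF (f : ℝ → ℝ → ℝ) : ℝ × ℝ → ℝ := fun p => hinv f p.1 p.2

/-- The quotient measure `μ̂ = (π_f)_* μ`. -/
def quotM {C γ : ℝ} (F : Fol C γ) : Measure ℝ := muM.map (projF F.f)

/-- The leaf `L_y = {(x, f(x,y)) : x ∈ [0,1]}`. -/
def Leaf {C γ : ℝ} (F : Fol C γ) (y : ℝ) : Set (ℝ × ℝ) :=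
  (fun x => (x, F.f x y)) '' unitInterval

/-- `(ν_y)` is a Rokhlin disintegration of Lebesgue measure on the square w.r.t. `π_f`. -/
def IsDisint {C γ : ℝ} (F : Fol C γ) (ν : ℝ → Measure (ℝ × ℝ)) : Prop :=
  (∀ y, IsProbabilityMeasure (ν y)) ∧
  (∀ E : Set (ℝ × ℝ), MeasurableSet E → Measurable fun y => ν y E) ∧
  (∀ᵐ y ∂quotM F, ν y (Leaf F y) = 1) ∧
  (∀ E : Set (ℝ × ℝ), MeasurableSet E → muM E = ∫⁻ y, ν y E ∂quotM F)

/-- The element `P_i` of the partition `P_{f,n}`. -/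
def Pelt (f : ℝ → ℝ → ℝ) (n i : ℕ) : Set (ℝ × ℝ) :=
  {p | p.1 ∈ unitInterval ∧ f p.1 ((i : ℝ) / 2 ^ n) ≤ p.2 ∧ p.2 < f p.1 (((i : ℝ) + 1) / 2 ^ n)}

/-- `Ĩ = [b₁,b₂] × [0,1]`. -/
def Itilde (b₁ b₂ : ℝ) : Set (ℝ × ℝ) := Icc b₁ b₂ ×ˢ unitInterval

/-- The set `A_{n,m,I}`. -/
def Aset (C γ : ℝ) (n m : ℕ) (b₁ b₂ : ℝ) : Set (Fol C γ) :=
  {F | ∀ i < 2 ^ n,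
    muM (Pelt F.f n i ∩ Itilde b₁ b₂) / muM (Pelt F.f n i) < 1 / (m : ℝ≥0∞) ∨
    1 - 1 / (m : ℝ≥0∞) < muM (Pelt F.f n i ∩ Itilde b₁ b₂) / muM (Pelt F.f n i)}

/-- The set `B_{m,I}`. -/
def Bset (C γ : ℝ) (m : ℕ) (b₁ b₂ : ℝ) : Set (Fol C γ) := ⋃ n : ℕ, Aset C γ n m b₁ b₂

/-- The leaf measure `λ_y`: pushforward of 1-dimensional Lebesgue measure on `[0,1]`
under `x ↦ (x, f(x,y))`. -/
def leafMeas {C γ : ℝ} (F : Fol C γ) (y : ℝ) : Measure (ℝ × ℝ) :=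
  (volume.restrict unitInterval).map fun x => (x, F.f x y)

lemma fol_cont {C β : ℝ} {f fx : ℝ → ℝ → ℝ} (hβ : 0 < β) (h : IsFol C β f fx)
    {x : ℝ} (hx : x ∈ unitInterval) : ContinuousOn (f x) unitInterval := by
  intro y hy
  rw [ContinuousWithinAt, tendsto_iff_dist_tendsto_zero]
  have h1 : Tendsto (fun z => C * |z - y| ^ β) (𝓝[unitInterval] y) (𝓝 0) := by
    have : Continuous (fun z : ℝ => C * |z - y| ^ β) := by
      refine continuous_const.mul ?_
      exact ((continuous_id.sub continuous_const).abs).rpow_const (fun _ => Or.inr hβ.le)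
    have h2 := this.tendsto y
    simp only [sub_self, abs_zero, Real.zero_rpow hβ.ne', mul_zero] at h2
    exact h2.mono_left nhdsWithin_le_nhds
  refine squeeze_zero' (Eventually.of_forall fun _ => dist_nonneg) ?_ h1
  filter_upwards [self_mem_nhdsWithin] with z hz
  rw [Real.dist_eq]
  by_cases hzy : z = y
  · subst hzy; simp [Real.zero_rpow hβ.ne']
  · exact h.upper x hx y hy z hz (Ne.symm hzy)

lemma fol_inj {C β : ℝ} {f fx : ℝ → ℝ → ℝ} (hC : 0 < C) (h : IsFol C β f fx)
    {x : ℝ} (hx : x ∈ unitInterval) : InjOn (f x) unitInterval := by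
  intro a ha b hb hab
  by_contra hne
  have := h.lower x hx a ha b hb hne
  rw [hab, sub_self, abs_zero] at this
  have h1 : 0 < C⁻¹ * |b - a| ^ (1 / β) :=
    mul_pos (inv_pos.2 hC) (Real.rpow_pos_of_pos (abs_pos.2 (sub_ne_zero.2 (Ne.symm hne))) _)
  linarith

lemma fol_mono {C β : ℝ} {f fx : ℝ → ℝ → ℝ} (hC : 0 < C) (hβ : 0 < β) (h : IsFol C β f fx)
    {x : ℝ} (hx : x ∈ unitInterval) : StrictMonoOn (f x) unitInterval := by
  refine ContinuousOn.strictMonoOn_of_injOn_Icc zero_le_one ?_ (fol_cont hβ h hx) (fol_inj hC h hx)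
  rw [h.eq_bot x hx, h.eq_top x hx]; exact zero_le_one

lemma fol_lower {C β : ℝ} {f fx : ℝ → ℝ → ℝ} (hC : 0 < C) (hβ : 0 < β) (h : IsFol C β f fx)
    {x y z : ℝ} (hx : x ∈ unitInterval) (hy : y ∈ unitInterval) (hz : z ∈ unitInterval)
    (hyz : y ≤ z) : C⁻¹ * (z - y) ^ (1 / β) ≤ f x z - f x y := by
  rcases hyz.eq_or_lt with rfl | hlt
  · simp [Real.zero_rpow (inv_ne_zero hβ.ne')]
  · have := h.lower x hx y hy z hz hlt.ne
    rwa [abs_of_pos (sub_pos.2 hlt), abs_of_pos (sub_pos.2 (fol_mono hC hβ h hx hy hz hlt))] at this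

lemma fol_upper {C β : ℝ} {f fx : ℝ → ℝ → ℝ} (hC : 0 < C) (hβ : 0 < β) (h : IsFol C β f fx)
    {x y z : ℝ} (hx : x ∈ unitInterval) (hy : y ∈ unitInterval) (hz : z ∈ unitInterval)
    (hyz : y ≤ z) : f x z - f x y ≤ C * (z - y) ^ β := by
  rcases hyz.eq_or_lt with rfl | hlt
  · simp [Real.zero_rpow hβ.ne']
  · have := h.upper x hx y hy z hz hlt.ne
    rwa [abs_of_pos (sub_pos.2 hlt), abs_of_pos (sub_pos.2 (fol_mono hC hβ h hx hy hz hlt))] at this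

lemma fol_contx {C β : ℝ} {f fx : ℝ → ℝ → ℝ} (h : IsFol C β f fx)
    {y : ℝ} (hy : y ∈ unitInterval) : ContinuousOn (fun x => f x y) unitInterval :=
  fun x hx => (h.hasDeriv y hy x hx).continuousWithinAt

lemma fol_hinv {C β : ℝ} {f fx : ℝ → ℝ → ℝ} (hβ : 0 < β) (h : IsFol C β f fx)
    {x z : ℝ} (hx : x ∈ unitInterval) (hz : z ∈ unitInterval) :
    hinv f x z ∈ unitInterval ∧ f x (hinv f x z) = z := by
  have h1 : ∃ a ∈ unitInterval, f x a = z := by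
    have := intermediate_value_Icc (zero_le_one (α := ℝ)) (fol_cont hβ h hx)
    rw [h.eq_bot x hx, h.eq_top x hx] at this
    exact this hz
  exact ⟨Function.invFunOn_mem h1, Function.invFunOn_eq h1⟩

/-- The derivative in `x` vanishes on the bottom. -/
lemma fol_fx_zero {C β : ℝ} {f fx : ℝ → ℝ → ℝ} (h : IsFol C β f fx)
    {x : ℝ} (hx : x ∈ unitInterval) : fx x 0 = 0 := by
  have h1 := h.hasDeriv 0 ⟨le_rfl, zero_le_one⟩ x hx
  have h2 : HasDerivWithinAt (fun x' => f x' 0) 0 unitInterval x := by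
    refine (hasDerivWithinAt_const x unitInterval (0:ℝ)).congr ?_ ?_
    · intro y hy; exact h.eq_bot y hy
    · exact h.eq_bot x hx
  have hu : UniqueDiffWithinAt ℝ unitInterval x := uniqueDiffOn_Icc zero_lt_one x hx
  exact hu.eq_deriv _ h1 h2

/-- C0 closeness from closeness of the `x`-derivatives. -/
lemma fol_c0 {C β C' β' : ℝ} {f fx g gx : ℝ → ℝ → ℝ} (hf : IsFol C β f fx) (hg : IsFol C' β' g gx)
    {δ : ℝ} (hδ : ∀ x ∈ unitInterval, ∀ y ∈ unitInterval, |fx x y - gx x y| ≤ δ)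
    {x y : ℝ} (hx : x ∈ unitInterval) (hy : y ∈ unitInterval) : |f x y - g x y| ≤ δ := by
  have := Convex.norm_image_sub_le_of_norm_hasDerivWithin_le
    (f := fun x => f x y - g x y) (f' := fun x => fx x y - gx x y) (C := δ)
    (s := unitInterval) (x := 0) (y := x)
    (fun x hx => (hf.hasDeriv y hy x hx).sub (hg.hasDeriv y hy x hx))
    (fun x hx => by simpa using hδ x hx y hy) (convex_Icc 0 1) ⟨le_rfl, zero_le_one⟩ hx
  simp only [hf.eq_id y hy, hg.eq_id y hy, sub_self, sub_zero, Real.norm_eq_abs,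
    abs_of_nonneg hx.1] at this
  have hδ0 : 0 ≤ δ := (abs_nonneg _).trans (hδ x hx y hy)
  have h3 : δ * x ≤ δ := mul_le_of_le_one_right hδ0 hx.2
  linarith

lemma interp_bound {α β A B X Δ : ℝ} (hα : 0 ≤ α) (hαβ : α < β) (hΔ : 0 < Δ)
    (hB : 0 ≤ B) (hX : 0 ≤ X) (h1 : X ≤ A) (h2 : X ≤ B * Δ ^ β) :
    X / Δ ^ α ≤ A ^ (1 - α / β) * B ^ (α / β) := by
  have hβ : 0 < β := hα.trans_lt hαβ
  have hr : 0 ≤ α / β := by positivity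
  have hr1 : 0 < 1 - α / β := by rw [sub_pos, div_lt_one hβ]; exact hαβ
  rw [div_le_iff₀ (Real.rpow_pos_of_pos hΔ α)]
  have e1 : X = X ^ (1 - α / β) * X ^ (α / β) := by
    rw [← Real.rpow_add_of_nonneg hX hr1.le hr]; simp
  have e2 : Δ ^ α = (Δ ^ β) ^ (α / β) := by
    rw [← Real.rpow_mul hΔ.le]; congr 1; field_simp
  rw [e2, mul_assoc, ← Real.mul_rpow hB (by positivity)]
  calc X = X ^ (1 - α / β) * X ^ (α / β) := e1
    _ ≤ A ^ (1 - α / β) * (B * Δ ^ β) ^ (α / β) := by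
      gcongr
      exact Real.rpow_nonneg (hX.trans h1) _

lemma rpow_small {r K ε : ℝ} (hr : 0 < r) (hε : 0 < ε) :
    ∃ δ > 0, ∀ t, 0 ≤ t → t ≤ δ → t ^ r * K < ε := by
  have h1 : Tendsto (fun t : ℝ => t ^ r * K) (𝓝 0) (𝓝 0) := by
    have := ((Real.continuous_rpow_const (q := r) hr.le).mul continuous_const).tendsto (x := 0) (f := fun t : ℝ => t ^ r * K)
    simpa [Real.zero_rpow hr.ne'] using this
  have h2 := (Metric.tendsto_nhds_nhds.1 h1) ε hε
  obtain ⟨δ, hδ, h⟩ := h2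
  refine ⟨δ / 2, by positivity, fun t ht htδ => ?_⟩
  have := h (x := t) (by rw [Real.dist_eq, sub_zero, abs_of_nonneg ht]; linarith)
  rw [Real.dist_eq, sub_zero] at this
  exact (le_abs_self _).trans_lt this

lemma hinv_holder {C β : ℝ} {f fx : ℝ → ℝ → ℝ} (hC : 0 < C) (hβ : 0 < β) (h : IsFol C β f fx)
    {x : ℝ} (hx : x ∈ unitInterval) {y z : ℝ} (hy : y ∈ unitInterval) (hz : z ∈ unitInterval) :
    |y - z| ≤ C ^ β * |f x y - f x z| ^ β := by
  by_cases hne : z = y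
  · subst hne; simp [Real.zero_rpow hβ.ne']
  have h1 := h.lower x hx z hz y hy hne
  rw [inv_mul_le_iff₀ hC] at h1
  have h2 := Real.rpow_le_rpow (by positivity) h1 hβ.le
  rwa [← Real.rpow_mul (abs_nonneg _), one_div, inv_mul_cancel₀ hβ.ne', Real.rpow_one,
    Real.mul_rpow hC.le (abs_nonneg _)] at h2

lemma dist_small {C β α : ℝ} (hC : 0 < C) (hα : 0 ≤ α) (hαβ : α < β) {ε : ℝ} (hε : 0 < ε) :
    ∃ δ > 0, ∀ F G : Fol C β,
      (∀ x ∈ unitInterval, ∀ y ∈ unitInterval, |F.fx x y - G.fx x y| ≤ δ) → dalphaF α F G < ε := by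
  have hβ : 0 < β := hα.trans_lt hαβ
  have hr1 : 0 < 1 - α / β := by rw [sub_pos, div_lt_one hβ]; exact hαβ
  obtain ⟨δ₁, hδ₁, h1⟩ := rpow_small (K := (2 * C) ^ (α / β)) hr1 (show 0 < ε / 4 by positivity)
  obtain ⟨δ₂, hδ₂, h2⟩ := rpow_small (K := (2 * C ^ β) ^ (α / β)) hr1 (show 0 < ε / 4 by positivity)
  obtain ⟨δ₃, hδ₃, h3⟩ := rpow_small (K := 2 * C ^ β) hβ hδ₂
  refine ⟨min (min (ε / 4) (δ₁ / 2)) δ₃, by positivity, fun F G hFG => ?_⟩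
  set δ := min (min (ε / 4) (δ₁ / 2)) δ₃ with hδ
  have hδ0 : 0 < δ := by positivity
  have d1 : δ ≤ ε / 4 := (min_le_left _ _).trans (min_le_left _ _)
  have d2 : δ ≤ δ₁ / 2 := (min_le_left _ _).trans (min_le_right _ _)
  have d3 : δ ≤ δ₃ := min_le_right _ _
  have hF := F.isFol
  have hG := G.isFol
  have c0 : ∀ x ∈ unitInterval, ∀ y ∈ unitInterval, |F.f x y - G.f x y| ≤ δ :=
    fun x hx y hy => fol_c0 hF hG hFG hx hy
  have a1 : C0dist F.f G.f ≤ ε / 4 := by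
    refine Real.sSup_le ?_ (by positivity)
    rintro r ⟨x, hx, y, hy, rfl⟩
    exact (c0 x hx y hy).trans d1
  have a2 : C0dist F.fx G.fx ≤ ε / 4 := by
    refine Real.sSup_le ?_ (by positivity)
    rintro r ⟨x, hx, y, hy, rfl⟩
    exact (hFG x hx y hy).trans d1
  have a3 : sSup {r | ∃ x ∈ unitInterval,
      r = max (holDist α (F.f x) (G.f x)) (holDist α (hinv F.f x) (hinv G.f x))} ≤ ε / 4 := by
    refine Real.sSup_le ?_ (by positivity)
    rintro r ⟨x, hx, rfl⟩
    refine max_le (Real.sSup_le ?_ (by positivity)) (Real.sSup_le ?_ (by positivity))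
    · rintro r ⟨y, hy, z, hz, hyz, rfl⟩
      have hΔ : 0 < |z - y| := abs_pos.2 (sub_ne_zero.2 (Ne.symm hyz))
      refine (interp_bound (A := 2 * δ) (B := 2 * C) hα hαβ hΔ (by positivity) (abs_nonneg _)
        ?_ ?_).trans (h1 (2 * δ) (by positivity) (by linarith)).le
      · have := c0 x hx z hz
        have := c0 x hx y hy
        have := abs_sub (F.f x z - G.f x z) (F.f x y - G.f x y)
        linarith
      · have e1 := hF.upper x hx y hy z hz hyz
        have e2 := hG.upper x hx y hy z hz hyz
        have := abs_sub (F.f x z - F.f x y) (G.f x z - G.f x y)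
        rw [show F.f x z - G.f x z - (F.f x y - G.f x y)
          = F.f x z - F.f x y - (G.f x z - G.f x y) by ring]
        linarith
    · rintro r ⟨y, hy, z, hz, hyz, rfl⟩
      have hΔ : 0 < |z - y| := abs_pos.2 (sub_ne_zero.2 (Ne.symm hyz))
      have key : ∀ w ∈ unitInterval, |hinv F.f x w - hinv G.f x w| ≤ C ^ β * δ ^ β := by
        intro w hw
        obtain ⟨p1, p2⟩ := fol_hinv hβ hF hx hw
        obtain ⟨q1, q2⟩ := fol_hinv hβ hG hx hw
        refine (hinv_holder hC hβ hF hx p1 q1).trans ?_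
        gcongr
        rw [p2]
        have := c0 x hx _ q1
        rw [q2] at this
        rwa [abs_sub_comm]
      refine (interp_bound (A := δ ^ β * (2 * C ^ β)) (B := 2 * C ^ β) hα hαβ hΔ (by positivity)
        (abs_nonneg _) ?_ ?_).trans (h2 (δ ^ β * (2 * C ^ β)) (by positivity)
          (h3 δ hδ0.le d3).le).le
      · have := key z hz
        have := key y hy
        have := abs_sub (hinv F.f x z - hinv G.f x z) (hinv F.f x y - hinv G.f x y)
        linarith
      · obtain ⟨p1, p2⟩ := fol_hinv hβ hF hx hy
        obtain ⟨q1, q2⟩ := fol_hinv hβ hG hx hy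
        obtain ⟨p1', p2'⟩ := fol_hinv hβ hF hx hz
        obtain ⟨q1', q2'⟩ := fol_hinv hβ hG hx hz
        have e1 := hinv_holder hC hβ hF hx p1' p1
        have e2 := hinv_holder hC hβ hG hx q1' q1
        rw [p2, p2'] at e1
        rw [q2, q2'] at e2
        have := abs_sub (hinv F.f x z - hinv F.f x y) (hinv G.f x z - hinv G.f x y)
        rw [show hinv F.f x z - hinv G.f x z - (hinv F.f x y - hinv G.f x y)
          = hinv F.f x z - hinv F.f x y - (hinv G.f x z - hinv G.f x y) by ring]
        linarith
  unfold dalphaF dalpha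
  linarith

lemma c0_le_dist {C β α : ℝ} (F G : Fol C β) {x y : ℝ} (hx : x ∈ unitInterval)
    (hy : y ∈ unitInterval) : |F.f x y - G.f x y| ≤ dalphaF α F G := by
  have hol : ∀ h k : ℝ → ℝ, 0 ≤ holDist α h k := by
    intro h k
    refine Real.sSup_nonneg ?_
    rintro r ⟨y, hy, z, hz, hyz, rfl⟩
    positivity
  have a1 : |F.f x y - G.f x y| ≤ C0dist F.f G.f := by
    refine le_csSup ⟨1, ?_⟩ ⟨x, hx, y, hy, rfl⟩
    rintro r ⟨x, hx, y, hy, rfl⟩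
    have p := F.isFol.mapsTo x hx y hy
    have q := G.isFol.mapsTo x hx y hy
    rw [abs_le]
    constructor <;> linarith [p.1, p.2, q.1, q.2]
  have a2 : 0 ≤ C0dist F.fx G.fx := by
    refine Real.sSup_nonneg ?_
    rintro r ⟨x, hx, y, hy, rfl⟩
    positivity
  have a3 : 0 ≤ sSup {r | ∃ x ∈ unitInterval,
      r = max (holDist α (F.f x) (G.f x)) (holDist α (hinv F.f x) (hinv G.f x))} := by
    refine Real.sSup_nonneg ?_
    rintro r ⟨x, hx, rfl⟩
    exact le_max_of_le_left (hol _ _)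
  unfold dalphaF dalpha
  linarith

/-- width of the strip `i` at `x` -/
def wid (f : ℝ → ℝ → ℝ) (n i : ℕ) (x : ℝ) : ℝ :=
  f x (((i : ℝ) + 1) / 2 ^ n) - f x ((i : ℝ) / 2 ^ n)

lemma node_mem {n i : ℕ} (hi : i < 2 ^ n) : (i : ℝ) / 2 ^ n ∈ unitInterval ∧
    ((i : ℝ) + 1) / 2 ^ n ∈ unitInterval := by
  have h : (i : ℝ) + 1 ≤ 2 ^ n := by exact_mod_cast hi
  have hp : (0:ℝ) < 2 ^ n := by positivity
  refine ⟨⟨by positivity, ?_⟩, ⟨by positivity, ?_⟩⟩ <;> rw [div_le_one hp] <;> linarith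

lemma wid_cont {C β : ℝ} {f fx : ℝ → ℝ → ℝ} (h : IsFol C β f fx) {n i : ℕ} (hi : i < 2 ^ n) :
    ContinuousOn (wid f n i) unitInterval :=
  (fol_contx h (node_mem hi).2).sub (fol_contx h (node_mem hi).1)

lemma wid_pos {C β : ℝ} {f fx : ℝ → ℝ → ℝ} (hC : 0 < C) (hβ : 0 < β) (h : IsFol C β f fx)
    {n i : ℕ} (hi : i < 2 ^ n) {x : ℝ} (hx : x ∈ unitInterval) : 0 < wid f n i x := by
  refine sub_pos.2 (fol_mono hC hβ h hx (node_mem hi).1 (node_mem hi).2 ?_)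
  gcongr
  linarith

lemma wid_int {C β : ℝ} {f fx : ℝ → ℝ → ℝ} (h : IsFol C β f fx) {n i : ℕ} (hi : i < 2 ^ n)
    {a b : ℝ} (ha : a ∈ unitInterval) (hb : b ∈ unitInterval) :
    IntervalIntegrable (wid f n i) volume a b := by
  refine ContinuousOn.intervalIntegrable ((wid_cont h hi).mono ?_)
  exact uIcc_subset_Icc ha hb

lemma mu_strip {C β : ℝ} {f fx : ℝ → ℝ → ℝ} (hC : 0 < C) (hβ : 0 < β) (h : IsFol C β f fx)
    {n i : ℕ} (hi : i < 2 ^ n) {a b : ℝ} (ha : a ∈ unitInterval) (hb : b ∈ unitInterval)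
    (hab : a ≤ b) :
    muM (Pelt f n i ∩ Itilde a b) = ENNReal.ofReal (∫ x in a..b, wid f n i x) := by
  have hn1 := (node_mem hi).1
  have hn2 := (node_mem hi).2
  set y₁ := (i : ℝ) / 2 ^ n with hy₁
  set y₂ := ((i : ℝ) + 1) / 2 ^ n with hy₂
  have hsub : Icc a b ⊆ unitInterval := Icc_subset_Icc ha.1 hb.2
  let g₁ : ℝ → ℝ := IccExtend hab ((Icc a b).domRestrict fun x => f x y₁)
  let g₂ : ℝ → ℝ := IccExtend hab ((Icc a b).domRestrict fun x => f x y₂)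
  have hg₁ : Continuous g₁ :=
    ((fol_contx h hn1).mono hsub).domRestrict.Icc_extend'
  have hg₂ : Continuous g₂ :=
    ((fol_contx h hn2).mono hsub).domRestrict.Icc_extend'
  have eg₁ : ∀ x ∈ Icc a b, g₁ x = f x y₁ := fun x hx => by
    simp only [g₁, IccExtend_of_mem hab _ hx, domRestrict_apply]
  have eg₂ : ∀ x ∈ Icc a b, g₂ x = f x y₂ := fun x hx => by
    simp only [g₂, IccExtend_of_mem hab _ hx, domRestrict_apply]
  let E : Set (ℝ × ℝ) := {p | p.1 ∈ Icc a b ∧ g₁ p.1 ≤ p.2 ∧ p.2 < g₂ p.1}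
  have hE : MeasurableSet E := by
    refine (measurableSet_Icc.preimage measurable_fst).inter
      (MeasurableSet.inter ?_ ?_)
    · exact measurableSet_le (hg₁.measurable.comp measurable_fst) measurable_snd
    · exact measurableSet_lt measurable_snd (hg₂.measurable.comp measurable_fst)
  have hset : Pelt f n i ∩ Itilde a b ∩ MSq = E := by
    ext ⟨x, z⟩
    simp only [Pelt, Itilde, MSq, mem_inter_iff, mem_ofPred_eq, mem_prod, E]
    constructor
    · rintro ⟨⟨⟨_, h1, h2⟩, h3, _⟩, _⟩
      rw [eg₁ x h3, eg₂ x h3]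
      exact ⟨h3, h1, h2⟩
    · rintro ⟨h3, h1, h2⟩
      rw [eg₁ x h3] at h1
      rw [eg₂ x h3] at h2
      have hx := hsub h3
      have hz : z ∈ unitInterval :=
        ⟨(h.mapsTo x hx _ hn1).1.trans h1, h2.le.trans (h.mapsTo x hx _ hn2).2⟩
      exact ⟨⟨⟨hx, h1, h2⟩, h3, hz⟩, hx, hz⟩
  have hM : MeasurableSet MSq := measurableSet_Icc.prod measurableSet_Icc
  rw [muM, Measure.restrict_apply' hM, hset, Measure.volume_eq_prod, Measure.prod_apply hE,
    intervalIntegral.integral_of_le hab, ← integral_Icc_eq_integral_Ioc,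
    ofReal_integral_eq_lintegral_ofReal, ← lintegral_indicator measurableSet_Icc]
  · congr 1
    ext x
    by_cases hx : x ∈ Icc a b
    · rw [indicator_of_mem hx]
      have : Prod.mk x ⁻¹' E = Ico (g₁ x) (g₂ x) := by
        ext z; simp only [E, mem_preimage, mem_ofPred_eq, mem_Ico]; tauto
      rw [this, Real.volume_Ico, eg₁ x hx, eg₂ x hx]; rfl
    · rw [indicator_of_notMem hx]
      have : Prod.mk x ⁻¹' E = ∅ := by
        ext z; simp only [E, mem_preimage, mem_ofPred_eq, mem_empty_iff_false]; tauto
      rw [this, measure_empty]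
  · exact ((wid_cont h hi).mono hsub).integrableOn_Icc
  · exact (ae_restrict_mem measurableSet_Icc).mono fun x hx => (wid_pos hC hβ h hi (hsub hx)).le

lemma mu_strip' {C β : ℝ} {f fx : ℝ → ℝ → ℝ} (hC : 0 < C) (hβ : 0 < β) (h : IsFol C β f fx)
    {n i : ℕ} (hi : i < 2 ^ n) :
    muM (Pelt f n i) = ENNReal.ofReal (∫ x in (0:ℝ)..1, wid f n i x) := by
  rw [← mu_strip hC hβ h hi ⟨le_rfl, zero_le_one⟩ ⟨zero_le_one, le_rfl⟩ zero_le_one]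
  have : Itilde 0 1 = MSq := rfl
  have hM : MeasurableSet MSq := measurableSet_Icc.prod measurableSet_Icc
  rw [this, muM, Measure.restrict_apply' hM, Measure.restrict_apply' hM, inter_assoc, inter_self]

lemma ratio_lt {m : ℕ} (hm : 1 ≤ m) {A T : ℝ} (hA : 0 ≤ A) (hT : 0 < T) :
    ENNReal.ofReal A / ENNReal.ofReal T < 1 / (m : ℝ≥0∞) ↔ m * A < T := by
  have hm' : (0:ℝ) < m := by exact_mod_cast hm
  rw [← ENNReal.ofReal_div_of_pos hT, one_div, ← ENNReal.ofReal_natCast,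
    ← ENNReal.ofReal_inv_of_pos hm', ENNReal.ofReal_lt_ofReal_iff (by positivity),
    div_lt_iff₀ hT, inv_mul_eq_div, lt_div_iff₀ hm', mul_comm]

lemma ratio_gt {m : ℕ} (hm : 1 ≤ m) {A T : ℝ} (hA : 0 ≤ A) (hT : 0 < T) :
    1 - 1 / (m : ℝ≥0∞) < ENNReal.ofReal A / ENNReal.ofReal T ↔ m * (T - A) < T := by
  have hm' : (0:ℝ) < m := by exact_mod_cast hm
  have hm1 : (1:ℝ) ≤ m := by exact_mod_cast hm
  have hi : (m:ℝ)⁻¹ ≤ 1 := inv_le_one_of_one_le₀ hm1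
  rw [← ENNReal.ofReal_div_of_pos hT, one_div, ← ENNReal.ofReal_natCast,
    ← ENNReal.ofReal_inv_of_pos hm', ← ENNReal.ofReal_one, ← ENNReal.ofReal_sub _ (by positivity),
    ENNReal.ofReal_lt_ofReal_iff_of_nonneg (by linarith), lt_div_iff₀ hT]
  have e : (1 - (m:ℝ)⁻¹) * T * m = m * T - T := by field_simp
  constructor
  · intro h; nlinarith
  · intro h
    by_contra hc
    push Not at hc
    nlinarith

lemma T_pos {C β : ℝ} {f fx : ℝ → ℝ → ℝ} (hC : 0 < C) (hβ : 0 < β) (h : IsFol C β f fx)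
    {n i : ℕ} (hi : i < 2 ^ n) : 0 < ∫ x in (0:ℝ)..1, wid f n i x := by
  refine intervalIntegral.intervalIntegral_pos_of_pos_on
    (wid_int h hi ⟨le_rfl, zero_le_one⟩ ⟨zero_le_one, le_rfl⟩) ?_ zero_lt_one
  intro x hx
  exact wid_pos hC hβ h hi ⟨hx.1.le, hx.2.le⟩

lemma mem_Aset_iff {C β : ℝ} (hC : 0 < C) (hβ : 0 < β) {n m : ℕ} (hm : 1 ≤ m) {a b : ℝ}
    (ha : a ∈ unitInterval) (hb : b ∈ unitInterval) (hab : a ≤ b) (F : Fol C β) :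
    F ∈ Aset C β n m a b ↔ ∀ i < 2 ^ n,
      m * (∫ x in a..b, wid F.f n i x) < ∫ x in (0:ℝ)..1, wid F.f n i x ∨
      m * ((∫ x in (0:ℝ)..1, wid F.f n i x) - ∫ x in a..b, wid F.f n i x)
        < ∫ x in (0:ℝ)..1, wid F.f n i x := by
  unfold Aset
  rw [mem_ofPred_eq]
  refine forall₂_congr fun i hi => ?_
  have hA : 0 ≤ ∫ x in a..b, wid F.f n i x :=
    intervalIntegral.integral_nonneg hab fun x hx =>
      (wid_pos hC hβ F.isFol hi ⟨ha.1.trans hx.1, hx.2.trans hb.2⟩).le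
  rw [mu_strip hC hβ F.isFol hi ha hb hab, mu_strip' hC hβ F.isFol hi,
    ratio_lt hm hA (T_pos hC hβ F.isFol hi), ratio_gt hm hA (T_pos hC hβ F.isFol hi)]

lemma int_close {C β : ℝ} (F G : Fol C β) {n i : ℕ} (hi : i < 2 ^ n) {a b ε : ℝ}
    (hab : a ≤ b) (ha : a ∈ unitInterval) (hb : b ∈ unitInterval)
    (h : ∀ x ∈ unitInterval, ∀ y ∈ unitInterval, |G.f x y - F.f x y| ≤ ε) :
    |(∫ x in a..b, wid G.f n i x) - ∫ x in a..b, wid F.f n i x| ≤ 2 * ε := by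
  rw [← intervalIntegral.integral_sub (wid_int G.isFol hi ha hb) (wid_int F.isFol hi ha hb)]
  have := intervalIntegral.norm_integral_le_of_norm_le_const (a := a) (b := b) (C := 2 * ε)
    (f := fun x => wid G.f n i x - wid F.f n i x) ?_
  · rw [Real.norm_eq_abs, abs_of_nonneg (sub_nonneg.2 hab)] at this
    refine this.trans (mul_le_of_le_one_right ?_ ?_)
    · have := (abs_nonneg _).trans (h a ha a ha); linarith
    · linarith [ha.1, hb.2]
  · intro x hx
    rw [uIoc_of_le hab] at hx
    have hx' : x ∈ unitInterval := ⟨ha.1.trans hx.1.le, hx.2.trans hb.2⟩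
    have h1 := h x hx' _ (node_mem hi).1
    have h2 := h x hx' _ (node_mem hi).2
    rw [Real.norm_eq_abs]
    unfold wid
    rw [abs_le] at *
    constructor <;> linarith [h1.1, h1.2, h2.1, h2.2]

lemma open_part {C β α : ℝ} (hC : 0 < C) (hβ : 0 < β) {m : ℕ} (hm : 1 ≤ m) {a b : ℝ}
    (ha : a ∈ unitInterval) (hb : b ∈ unitInterval) (hab : a ≤ b) :
    IsOpenWrt (fun F G : Fol C β => dalphaF α F G) (Bset C β m a b) := by
  intro F hF
  simp only [Bset, mem_iUnion] at hF
  obtain ⟨n, hn⟩ := hF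
  rw [mem_Aset_iff hC hβ hm ha hb hab] at hn
  have h0 : (0:ℝ) ∈ unitInterval := ⟨le_rfl, zero_le_one⟩
  have h1 : (1:ℝ) ∈ unitInterval := ⟨zero_le_one, le_rfl⟩
  have hm' : (0:ℝ) < m := by exact_mod_cast hm
  have key : ∀ i ∈ Finset.range (2 ^ n), ∀ᶠ ε : ℝ in 𝓝[>] 0, ∀ G : Fol C β,
      (∀ x ∈ unitInterval, ∀ y ∈ unitInterval, |G.f x y - F.f x y| ≤ ε) →
      (m * (∫ x in a..b, wid G.f n i x) < ∫ x in (0:ℝ)..1, wid G.f n i x ∨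
      m * ((∫ x in (0:ℝ)..1, wid G.f n i x) - ∫ x in a..b, wid G.f n i x)
        < ∫ x in (0:ℝ)..1, wid G.f n i x) := by
    intro i hi
    rw [Finset.mem_range] at hi
    rcases hn i hi with h | h
    · have hpos := sub_pos.2 h
      have : Ioo (0:ℝ) (((∫ x in (0:ℝ)..1, wid F.f n i x) - m * (∫ x in a..b, wid F.f n i x))
        / (4 * m + 2)) ∈ 𝓝[>] (0:ℝ) := Ioo_mem_nhdsGT (by positivity)
      filter_upwards [this] with ε hε G hG
      left
      have c1 := abs_le.1 (int_close F G hi hab ha hb hG)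
      have c2 := abs_le.1 (int_close F G hi zero_le_one h0 h1 hG)
      have := hε.2
      rw [lt_div_iff₀ (by positivity)] at this
      nlinarith [hε.1]
    · have hpos := sub_pos.2 h
      have : Ioo (0:ℝ) (((∫ x in (0:ℝ)..1, wid F.f n i x) - 
        m * ((∫ x in (0:ℝ)..1, wid F.f n i x) - ∫ x in a..b, wid F.f n i x))
        / (4 * m + 2)) ∈ 𝓝[>] (0:ℝ) := Ioo_mem_nhdsGT (by positivity)
      filter_upwards [this] with ε hε G hG
      right
      have c1 := abs_le.1 (int_close F G hi hab ha hb hG)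
      have c2 := abs_le.1 (int_close F G hi zero_le_one h0 h1 hG)
      have := hε.2
      rw [lt_div_iff₀ (by positivity)] at this
      have : m * (((∫ x in (0:ℝ)..1, wid G.f n i x) - ∫ x in a..b, wid G.f n i x) -
        ((∫ x in (0:ℝ)..1, wid F.f n i x) - ∫ x in a..b, wid F.f n i x)) ≤ m * (4 * ε) := by
        gcongr
        linarith [c1.1, c2.2]
      nlinarith [hε.1]
  rw [← Filter.eventually_all_finset] at key
  obtain ⟨ε, hε, hεpos⟩ := (key.and self_mem_nhdsWithin).exists
  refine ⟨ε, hεpos, fun G hG => ?_⟩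
  simp only [Bset, mem_iUnion]
  refine ⟨n, (mem_Aset_iff hC hβ hm ha hb hab G).2 fun i hi => ?_⟩
  refine hε i (Finset.mem_range.2 hi) G fun x hx y hy => ?_
  exact (c0_le_dist (α := α) G F hx hy).trans hG.le

lemma fx_bound {C β : ℝ} {f fx : ℝ → ℝ → ℝ} (h : IsFol C β f fx) :
    ∃ K > 0, ∀ x ∈ unitInterval, ∀ y ∈ unitInterval, |fx x y| ≤ K := by
  have hc : IsCompact MSq := isCompact_Icc.prod isCompact_Icc
  obtain ⟨K, hK⟩ := hc.exists_bound_of_continuousOn h.derivCont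
  refine ⟨max K 1, by positivity, fun x hx y hy => ?_⟩
  exact (hK (x, y) ⟨hx, hy⟩).trans (le_max_left _ _)

lemma slack {C β : ℝ} {f fx : ℝ → ℝ → ℝ} (hC : 1 < C) (hβ : 0 < β) (hβ1 : β < 1)
    (h : IsFol C β f fx) {δ : ℝ} (hδ : 0 < δ) :
    ∃ C₁ f₁ f₁x, 0 < C₁ ∧ C₁ < C ∧ IsFol C₁ β f₁ f₁x ∧
      ∀ x ∈ unitInterval, ∀ y ∈ unitInterval, |f₁x x y - fx x y| ≤ δ := by
  obtain ⟨K, hK, hKb⟩ := fx_bound h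
  obtain ⟨t, ht0, ht1, htK⟩ : ∃ t : ℝ, 0 < t ∧ t < 1 ∧ t * K ≤ δ := by
    refine ⟨min (1/2) (δ / K), by positivity, (min_le_left _ _).trans_lt (by norm_num), ?_⟩
    calc min (1/2) (δ / K) * K ≤ δ / K * K := by gcongr; exact min_le_right _ _
      _ = δ := by field_simp
  have hC0 : 0 < C := by linarith
  have hC₁ : 0 < (1 - t) * C + t := by nlinarith
  refine ⟨(1 - t) * C + t, fun x y => (1 - t) * f x y + t * y, fun x y => (1 - t) * fx x y, hC₁,
    by nlinarith, ?_, ?_⟩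
  · have pw1 : ∀ Δ : ℝ, 0 ≤ Δ → Δ ≤ 1 → Δ ≤ Δ ^ β := fun Δ h0 h1 => by
      simpa using Real.rpow_le_rpow_of_exponent_ge_of_imp h0 h1 hβ1.le (by intro _ h; simp_all)
    have pw2 : ∀ Δ : ℝ, 0 ≤ Δ → Δ ≤ 1 → Δ ^ (1 / β) ≤ Δ := fun Δ h0 h1 => by
      have : 1 ≤ 1 / β := by rw [le_div_iff₀ hβ]; linarith
      simpa using Real.rpow_le_rpow_of_exponent_ge_of_imp h0 h1 this (by intro _ h; simp_all)
    have hu : ∀ x ∈ unitInterval, ∀ y ∈ unitInterval, ∀ z ∈ unitInterval, y < z →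
        ((1 - t) * C + t)⁻¹ * (z - y) ^ (1 / β) ≤ (1 - t) * f x z + t * z - ((1 - t) * f x y + t * y) ∧
        (1 - t) * f x z + t * z - ((1 - t) * f x y + t * y) ≤ ((1 - t) * C + t) * (z - y) ^ β := by
      intro x hx y hy z hz hyz
      have e1 := fol_lower hC0 hβ h hx hy hz hyz.le
      have e2 := fol_upper hC0 hβ h hx hy hz hyz.le
      have e3 := pw1 (z - y) (by linarith) (by linarith [hy.1, hz.2])
      have e4 := pw2 (z - y) (by linarith) (by linarith [hy.1, hz.2])
      constructor
      · have e5 : ((1 - t) * C + t)⁻¹ ≤ (1 - t) * C⁻¹ + t := by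
          rw [inv_le_iff_one_le_mul₀ hC₁]
          have : C * C⁻¹ = 1 := mul_inv_cancel₀ hC0.ne'
          have h2 : 2 ≤ C + C⁻¹ := by
            have : 0 < C⁻¹ := by positivity
            nlinarith [sq_nonneg (C - 1)]
          nlinarith [mul_pos ht0 (sub_pos.2 ht1)]
        have e6 : 0 ≤ (z - y) ^ (1 / β) := Real.rpow_nonneg (by linarith) _
        calc _ ≤ ((1 - t) * C⁻¹ + t) * (z - y) ^ (1 / β) := by gcongr
          _ = (1 - t) * (C⁻¹ * (z - y) ^ (1 / β)) + t * (z - y) ^ (1 / β) := by ring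
          _ ≤ (1 - t) * (f x z - f x y) + t * (z - y) := by
            have : 0 ≤ 1 - t := by linarith
            gcongr
          _ = _ := by ring
      · calc _ = (1 - t) * (f x z - f x y) + t * (z - y) := by ring
          _ ≤ (1 - t) * (C * (z - y) ^ β) + t * (z - y) ^ β := by
            have : 0 ≤ 1 - t := by linarith
            gcongr
          _ = _ := by ring
    have hpos : ∀ x ∈ unitInterval, ∀ y ∈ unitInterval, ∀ z ∈ unitInterval, y < z →
        0 < (1 - t) * f x z + t * z - ((1 - t) * f x y + t * y) := by
      intro x hx y hy z hz hyz
      have := fol_mono hC0 hβ h hx hy hz hyz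
      nlinarith
    refine ⟨?_, ?_, ?_, ?_, ?_, ?_, ?_, ?_⟩
    · intro x hx y hy
      have := h.mapsTo x hx y hy
      exact (convex_Icc (0:ℝ) 1) this hy (by linarith) ht0.le (by ring)
    · intro y hy x hx
      exact ((h.hasDeriv y hy x hx).const_mul (1 - t)).add_const (t * y)
    · exact continuousOn_const.mul h.derivCont
    · intro y hy; simp only [h.eq_id y hy]; ring
    · intro x hx; simp only [h.eq_bot x hx]; ring
    · intro x hx; simp only [h.eq_top x hx]; ring
    · intro x hx y hy z hz hyz
      rcases lt_or_gt_of_ne hyz with hlt | hlt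
      · rw [abs_of_pos (sub_pos.2 hlt), abs_of_pos (hpos x hx y hy z hz hlt)]
        exact (hu x hx y hy z hz hlt).1
      · rw [abs_sub_comm, abs_of_pos (sub_pos.2 hlt), abs_sub_comm, abs_of_pos (hpos x hx z hz y hy hlt)]
        exact (hu x hx z hz y hy hlt).1
    · intro x hx y hy z hz hyz
      rcases lt_or_gt_of_ne hyz with hlt | hlt
      · rw [abs_of_pos (sub_pos.2 hlt), abs_of_pos (hpos x hx y hy z hz hlt)]
        exact (hu x hx y hy z hz hlt).2
      · rw [abs_sub_comm, abs_of_pos (hpos x hx z hz y hy hlt), abs_sub_comm, abs_of_pos (sub_pos.2 hlt)]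
        exact (hu x hx z hz y hy hlt).2
  · intro x hx y hy
    rw [show (1 - t) * fx x y - fx x y = -(t * fx x y) by ring, abs_neg, abs_mul, abs_of_pos ht0]
    exact (mul_le_mul_of_nonneg_left (hKb x hx y hy) ht0.le).trans htK

def rk (N k : ℕ) (y : ℝ) : ℝ := max 0 (min 1 ((N : ℝ) * y - k))

def dk (f : ℝ → ℝ → ℝ) (N k : ℕ) (x : ℝ) : ℝ := f x (((k + 1 : ℕ) : ℝ) / N) - f x ((k : ℝ) / N)

lemma rk_cont (N k : ℕ) : Continuous (rk N k) := by unfold rk; fun_prop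

lemma rk_mono (N k : ℕ) : Monotone (rk N k) := by
  intro y z h
  unfold rk
  gcongr

lemma rk_mem (N k : ℕ) (y : ℝ) : rk N k y ∈ unitInterval :=
  ⟨le_max_left _ _, max_le zero_le_one (min_le_left _ _)⟩

lemma rk_eval {N a k : ℕ} {s : ℝ} (hN : 0 < N) (hs : s ∈ unitInterval) :
    rk N k (((a : ℝ) + s) / N) = if k < a then 1 else if k = a then s else 0 := by
  have hN' : (0:ℝ) < N := by exact_mod_cast hN
  unfold rk
  rw [mul_div_cancel₀ _ hN'.ne']
  split_ifs with h1 h2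
  · have : (k:ℝ) + 1 ≤ a := by exact_mod_cast h1
    rw [min_eq_left (by linarith [hs.1])]; simp
  · subst h2; rw [add_sub_cancel_left, min_eq_right hs.2, max_eq_right hs.1]
  · have : (a:ℝ) + 1 ≤ k := by
      have : a + 1 ≤ k := by omega
      exact_mod_cast this
    exact max_eq_left ((min_le_right _ _).trans (by linarith [hs.2]))

lemma sum_eval {N a : ℕ} {s : ℝ} (ha : a < N) (hs : s ∈ unitInterval) (v : ℕ → ℝ) (Φ : ℝ → ℝ)
    (h0 : Φ 0 = 0) (h1 : Φ 1 = 1) :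
    ∑ k ∈ Finset.range N, (v (k + 1) - v k) * Φ (rk N k (((a : ℝ) + s) / N))
      = v a - v 0 + (v (a + 1) - v a) * Φ s := by
  have hN : 0 < N := by omega
  have hsub : Finset.range (a + 1) ⊆ Finset.range N := Finset.range_mono (by omega)
  rw [← Finset.sum_subset hsub, Finset.sum_range_succ]
  · rw [rk_eval hN hs, if_neg (lt_irrefl _), if_pos rfl]
    congr 1
    rw [← Finset.sum_range_sub]
    refine Finset.sum_congr rfl fun k hk => ?_
    rw [rk_eval hN hs, if_pos (Finset.mem_range.1 hk), h1, mul_one]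
  · intro k _ hk
    rw [Finset.mem_range] at hk
    rw [rk_eval hN hs, if_neg (by omega), if_neg (by omega), h0, mul_zero]

lemma decomp {N : ℕ} (hN : 0 < N) {y : ℝ} (hy : y ∈ unitInterval) :
    ∃ a < N, ∃ s ∈ unitInterval, y = ((a : ℝ) + s) / N := by
  have hN' : (0:ℝ) < N := by exact_mod_cast hN
  rcases hy.2.eq_or_lt with h | h
  · refine ⟨N - 1, by omega, 1, ⟨zero_le_one, le_rfl⟩, ?_⟩
    rw [h, Nat.cast_sub hN]; field_simp; simp
  · have h0 : 0 ≤ N * y := mul_nonneg hN'.le hy.1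
    refine ⟨⌊N * y⌋₊, ?_, N * y - ⌊N * y⌋₊, ⟨?_, ?_⟩, ?_⟩
    · rw [Nat.floor_lt h0]; nlinarith
    · linarith [Nat.floor_le h0]
    · linarith [Nat.lt_floor_add_one (N * y)]
    · field_simp; ring

lemma sum_rk {N : ℕ} (hN : 0 < N) {y : ℝ} (hy : y ∈ unitInterval) :
    ∑ k ∈ Finset.range N, rk N k y = N * y := by
  have hN' : (0:ℝ) < N := by exact_mod_cast hN
  obtain ⟨a, ha, s, hs, rfl⟩ := decomp hN hy
  have := sum_eval ha hs (fun k => (k : ℝ)) id rfl rfl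
  simp at this
  rw [this]; field_simp

lemma node_mem' {N k : ℕ} (hk : k ≤ N) : (k : ℝ) / N ∈ unitInterval := by
  refine ⟨by positivity, div_le_one_of_le₀ (by exact_mod_cast hk) (by positivity)⟩

/-- the piecewise linear interpolation inherits the bi-Hölder bounds -/
lemma lin_bounds {C β : ℝ} {f fx : ℝ → ℝ → ℝ} (hC : 0 < C) (hβ : 0 < β) (hβ1 : β < 1)
    (h : IsFol C β f fx) {N : ℕ} (hN : 0 < N) {x y z : ℝ} (hx : x ∈ unitInterval)
    (hy : y ∈ unitInterval) (hz : z ∈ unitInterval) (hyz : y < z) :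
    C⁻¹ * (z - y) ^ (1 / β) ≤ ∑ k ∈ Finset.range N, dk f N k x * rk N k z -
      ∑ k ∈ Finset.range N, dk f N k x * rk N k y ∧
    ∑ k ∈ Finset.range N, dk f N k x * rk N k z -
      ∑ k ∈ Finset.range N, dk f N k x * rk N k y ≤ C * (z - y) ^ β := by
  have hN' : (0:ℝ) < N := by exact_mod_cast hN
  obtain ⟨a, ha, s, hs, rfl⟩ := decomp hN hy
  obtain ⟨b, hb, t, ht, rfl⟩ := decomp hN hz
  have ea := sum_eval ha hs (fun k => f x ((k : ℝ) / N)) id rfl rfl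
  have eb := sum_eval hb ht (fun k => f x ((k : ℝ) / N)) id rfl rfl
  simp only [id] at ea eb
  unfold dk
  rw [ea, eb]
  set v : ℕ → ℝ := fun k => f x ((k : ℝ) / N) with hv
  change _ ≤ v b - v 0 + (v (b + 1) - v b) * t - (v a - v 0 + (v (a + 1) - v a) * s) ∧
    v b - v 0 + (v (b + 1) - v b) * t - (v a - v 0 + (v (a + 1) - v a) * s) ≤ _
  rw [div_lt_div_iff_of_pos_right hN'] at hyz
  have conc : ConcaveOn ℝ (Ici 0) fun q : ℝ => q ^ β := Real.concaveOn_rpow hβ.le hβ1.le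
  have conv : ConvexOn ℝ (Ici 0) fun q : ℝ => q ^ (1 / β) :=
    convexOn_rpow (by rw [le_div_iff₀ hβ]; linarith)
  have up : ∀ p q : ℕ, p ≤ q → q ≤ N → v q - v p ≤ C * (((q : ℝ) - p) / N) ^ β := by
    intro p q hpq hq
    have := fol_upper hC hβ h hx (node_mem' (hpq.trans hq)) (node_mem' hq) (by gcongr)
    rwa [← sub_div] at this
  have lo : ∀ p q : ℕ, p ≤ q → q ≤ N → C⁻¹ * (((q : ℝ) - p) / N) ^ (1 / β) ≤ v q - v p := by
    intro p q hpq hq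
    have := fol_lower hC hβ h hx (node_mem' (hpq.trans hq)) (node_mem' hq) (by gcongr)
    rwa [← sub_div] at this
  have hCi : 0 < C⁻¹ := inv_pos.2 hC
  obtain ⟨hs0, hs1⟩ := hs
  obtain ⟨ht0, ht1⟩ := ht
  rcases le_or_gt s t with hst | hst
  · have hab : a ≤ b := by
      by_contra hc
      have : (b:ℝ) + 1 ≤ a := by
        have : b + 1 ≤ a := by omega
        exact_mod_cast this
      linarith
    have hab' : (a:ℝ) ≤ b := by exact_mod_cast hab
    have m1 : ((b:ℝ) - a) / N ∈ Ici (0:ℝ) := div_nonneg (by linarith) hN'.le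
    have m2 : (((b + 1 : ℕ):ℝ) - a) / N ∈ Ici (0:ℝ) := by
      push_cast; exact div_nonneg (by linarith) hN'.le
    have w1 : 0 ≤ 1 - (t - s) := by linarith
    have w2 : 0 ≤ t - s := by linarith
    have J1 := conc.2 m1 m2 w1 w2 (by ring)
    have J2 := conv.2 m1 m2 w1 w2 (by ring)
    have e : (1 - (t - s)) • (((b:ℝ) - a) / N) + (t - s) • ((((b + 1 : ℕ):ℝ) - a) / N)
        = ((b:ℝ) + t) / N - ((a:ℝ) + s) / N := by
      simp only [smul_eq_mul]; push_cast; field_simp; ring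
    rw [e] at J1 J2
    simp only [smul_eq_mul] at J1 J2
    have u1 := up a b hab (by omega)
    have u2 := up a (b + 1) (by omega) (by omega)
    have u3 := up (a + 1) (b + 1) (by omega) (by omega)
    have l1 := lo a b hab (by omega)
    have l2 := lo a (b + 1) (by omega) (by omega)
    have l3 := lo (a + 1) (b + 1) (by omega) (by omega)
    rw [show (((b + 1 : ℕ):ℝ) - ((a + 1 : ℕ):ℝ)) = (b:ℝ) - a by push_cast; ring] at u3 l3
    have e2 : v b - v 0 + (v (b + 1) - v b) * t - (v a - v 0 + (v (a + 1) - v a) * s)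
      = (1 - t) * (v b - v a) + (t - s) * (v (b + 1) - v a) + s * (v (b + 1) - v (a + 1)) := by ring
    rw [e2]
    have q : 0 ≤ 1 - t := by linarith
    constructor
    · calc _ ≤ _ := mul_le_mul_of_nonneg_left J2 hCi.le
        _ = (1 - t) * (C⁻¹ * (((b:ℝ) - a) / N) ^ (1 / β))
          + (t - s) * (C⁻¹ * ((((b + 1 : ℕ):ℝ) - a) / N) ^ (1 / β))
          + s * (C⁻¹ * (((b:ℝ) - a) / N) ^ (1 / β)) := by ring
        _ ≤ _ := by gcongr
    · calc _ ≤ (1 - t) * (C * (((b:ℝ) - a) / N) ^ β)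
          + (t - s) * (C * ((((b + 1 : ℕ):ℝ) - a) / N) ^ β)
          + s * (C * (((b:ℝ) - a) / N) ^ β) := by gcongr
        _ = C * ((1 - (t - s)) * (((b:ℝ) - a) / N) ^ β
          + (t - s) * ((((b + 1 : ℕ):ℝ) - a) / N) ^ β) := by ring
        _ ≤ _ := mul_le_mul_of_nonneg_left J1 hC.le
  · have hab : a + 1 ≤ b := by
      by_contra hc
      have : (b:ℝ) ≤ a := by
        have : b ≤ a := by omega
        exact_mod_cast this
      linarith
    have hab' : ((a + 1 : ℕ):ℝ) ≤ b := by exact_mod_cast hab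
    have hab'' : (a:ℝ) ≤ b := by push_cast at hab'; linarith
    have m1 : ((b:ℝ) - a) / N ∈ Ici (0:ℝ) := div_nonneg (by linarith) hN'.le
    have m2 : ((b:ℝ) - (a + 1 : ℕ)) / N ∈ Ici (0:ℝ) := div_nonneg (by linarith) hN'.le
    have w1 : 0 ≤ 1 - (s - t) := by linarith
    have w2 : 0 ≤ s - t := by linarith
    have J1 := conc.2 m1 m2 w1 w2 (by ring)
    have J2 := conv.2 m1 m2 w1 w2 (by ring)
    have e : (1 - (s - t)) • (((b:ℝ) - a) / N) + (s - t) • (((b:ℝ) - (a + 1 : ℕ)) / N)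
        = ((b:ℝ) + t) / N - ((a:ℝ) + s) / N := by
      simp only [smul_eq_mul]; push_cast; field_simp; ring
    rw [e] at J1 J2
    simp only [smul_eq_mul] at J1 J2
    have u1 := up a b (by omega) (by omega)
    have u2 := up (a + 1) b (by omega) (by omega)
    have u3 := up (a + 1) (b + 1) (by omega) (by omega)
    have l1 := lo a b (by omega) (by omega)
    have l2 := lo (a + 1) b (by omega) (by omega)
    have l3 := lo (a + 1) (b + 1) (by omega) (by omega)
    rw [show (((b + 1 : ℕ):ℝ) - ((a + 1 : ℕ):ℝ)) = (b:ℝ) - a by push_cast; ring] at u3 l3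
    have e2 : v b - v 0 + (v (b + 1) - v b) * t - (v a - v 0 + (v (a + 1) - v a) * s)
      = (1 - s) * (v b - v a) + (s - t) * (v b - v (a + 1)) + t * (v (b + 1) - v (a + 1)) := by ring
    rw [e2]
    have q : 0 ≤ 1 - s := by linarith
    constructor
    · calc _ ≤ _ := mul_le_mul_of_nonneg_left J2 hCi.le
        _ = (1 - s) * (C⁻¹ * (((b:ℝ) - a) / N) ^ (1 / β))
          + (s - t) * (C⁻¹ * (((b:ℝ) - (a + 1 : ℕ)) / N) ^ (1 / β))
          + t * (C⁻¹ * (((b:ℝ) - a) / N) ^ (1 / β)) := by ring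
        _ ≤ _ := by gcongr
    · calc _ ≤ (1 - s) * (C * (((b:ℝ) - a) / N) ^ β)
          + (s - t) * (C * (((b:ℝ) - (a + 1 : ℕ)) / N) ^ β)
          + t * (C * (((b:ℝ) - a) / N) ^ β) := by gcongr
        _ = C * ((1 - (s - t)) * (((b:ℝ) - a) / N) ^ β
          + (s - t) * (((b:ℝ) - (a + 1 : ℕ)) / N) ^ β) := by ring
        _ ≤ _ := mul_le_mul_of_nonneg_left J1 hC.le

lemma patch {C C₁ β p P : ℝ} (hC₁ : 0 < C₁) (hCC : C₁ < C) (hβ : 0 < β) (hβ1 : β < 1)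
    (hp : 0 < p) (hP : 0 < P) : ∃ ρ > 0, ∀ Δ Δh Δg : ℝ, 0 < Δ →
      C₁⁻¹ * Δ ^ (1 / β) ≤ Δh → Δh ≤ C₁ * Δ ^ β → p * Δ ≤ Δg → Δg ≤ P * Δ → |Δg - Δh| ≤ ρ →
      C⁻¹ * Δ ^ (1 / β) ≤ Δg ∧ Δg ≤ C * Δ ^ β := by
  have hC : 0 < C := hC₁.trans hCC
  have hb : 1 < 1 / β := by rw [lt_div_iff₀ hβ]; linarith
  obtain ⟨δ₁, hδ₁, h1⟩ := rpow_small (r := 1 - β) (K := P) (by linarith) hC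
  obtain ⟨δ₂, hδ₂, h2⟩ := rpow_small (r := 1 / β - 1) (K := C⁻¹) (by linarith) hp
  have hii : 0 < C₁⁻¹ - C⁻¹ := sub_pos.2 (by gcongr)
  set d := min δ₁ δ₂ with hd
  have hd0 : 0 < d := by positivity
  have hCC' : 0 < C - C₁ := by linarith
  refine ⟨min ((C - C₁) * d ^ β) ((C₁⁻¹ - C⁻¹) * d ^ (1 / β)), by positivity, ?_⟩
  intro Δ Δh Δg hΔ l1 u1 l2 u2 hρ
  have hρ1 := hρ.trans (min_le_left _ _)
  have hρ2 := hρ.trans (min_le_right _ _)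
  rw [abs_le] at hρ1 hρ2
  rcases le_or_gt Δ d with hle | hgt
  · have a1 := h1 Δ hΔ.le (hle.trans (min_le_left _ _))
    have a2 := h2 Δ hΔ.le (hle.trans (min_le_right _ _))
    have b1 : Δ ^ (1 - β) * Δ ^ β = Δ := by rw [← Real.rpow_add hΔ]; simp
    have b2 : Δ ^ (1 / β - 1) * Δ = Δ ^ (1 / β) := by
      nth_rewrite 2 [← Real.rpow_one Δ]; rw [← Real.rpow_add hΔ]; simp
    have : 0 < Δ ^ β := Real.rpow_pos_of_pos hΔ _
    constructor
    · rw [← b2]; nlinarith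
    · have : P * Δ = Δ ^ (1 - β) * P * Δ ^ β := by rw [mul_right_comm, b1, mul_comm]
      nlinarith
  · have c1 : d ^ β ≤ Δ ^ β := by gcongr
    have c2 : d ^ (1 / β) ≤ Δ ^ (1 / β) := by gcongr
    constructor <;> nlinarith

def gI (f : ℝ → ℝ → ℝ) (N : ℕ) (σ τ : ℝ → ℝ) (x y : ℝ) : ℝ :=
  ∑ k ∈ Finset.range N, dk f N k x * (rk N k y + σ x * τ (rk N k y))

def gIx (f fx : ℝ → ℝ → ℝ) (N : ℕ) (σ σ' τ : ℝ → ℝ) (x y : ℝ) : ℝ :=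
  ∑ k ∈ Finset.range N, (dk fx N k x * (rk N k y + σ x * τ (rk N k y)) +
    dk f N k x * (σ' x * τ (rk N k y)))

lemma dk_pos {C β : ℝ} {f fx : ℝ → ℝ → ℝ} (hC : 0 < C) (hβ : 0 < β) (h : IsFol C β f fx)
    {N k : ℕ} (hk : k < N) {x : ℝ} (hx : x ∈ unitInterval) :
    C⁻¹ * (1 / N : ℝ) ^ (1 / β) ≤ dk f N k x ∧ dk f N k x ≤ 1 := by
  have m1 := node_mem' hk.le
  have m2 := node_mem' (show k + 1 ≤ N from hk)
  constructor
  · have := fol_lower hC hβ h hx m1 m2 (by gcongr; omega)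
    rw [← sub_div] at this
    push_cast at this
    rw [add_sub_cancel_left] at this
    unfold dk
    push_cast
    exact this
  · have e1 := h.mapsTo x hx _ m1
    have e2 := h.mapsTo x hx _ m2
    unfold dk
    linarith [e1.1, e2.2]

lemma dk_sum {C β : ℝ} {f fx : ℝ → ℝ → ℝ} (h : IsFol C β f fx)
    {N : ℕ} (hN : 0 < N) {x : ℝ} (hx : x ∈ unitInterval) :
    ∑ k ∈ Finset.range N, dk f N k x = 1 := by
  unfold dk
  rw [Finset.sum_range_sub (fun k : ℕ => f x ((k : ℝ) / N))]
  have hN' : (N : ℝ) ≠ 0 := by exact_mod_cast hN.ne'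
  rw [div_self hN', h.eq_top x hx]
  simp [h.eq_bot x hx]

lemma gI_isFol {C C₁ β κ D ρ p : ℝ} {f fx : ℝ → ℝ → ℝ} (hC₁ : 0 < C₁) (hβ : 0 < β) (hβ1 : β < 1)
    (h : IsFol C₁ β f fx) {N : ℕ} (hN : 0 < N) {σ σ' τ : ℝ → ℝ}
    (hσ : ∀ x, HasDerivAt σ (σ' x) x) (hσ' : Continuous σ') (hσ0 : σ 0 = 0)
    (hκ0 : 0 ≤ κ) (hκ : κ < 1) (hσκ : ∀ x ∈ unitInterval, |σ x| ≤ κ)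
    (hτ0 : τ 0 = 0) (hτ1 : τ 1 = 0) (hτ : ∀ s t, |τ s - τ t| ≤ |s - t|)
    (hτρ : ∀ s, |τ s| ≤ ρ / 2) (hD : D = C₁⁻¹ * (1 / N : ℝ) ^ (1 / β))
    (hp : p = (1 - κ) * D * N)
    (hpatch : ∀ Δ Δh Δg : ℝ, 0 < Δ →
      C₁⁻¹ * Δ ^ (1 / β) ≤ Δh → Δh ≤ C₁ * Δ ^ β → p * Δ ≤ Δg → Δg ≤ (2 * N) * Δ →
      |Δg - Δh| ≤ ρ → C⁻¹ * Δ ^ (1 / β) ≤ Δg ∧ Δg ≤ C * Δ ^ β) :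
    IsFol C β (gI f N σ τ) (gIx f fx N σ σ' τ) := by
  have hN' : (0:ℝ) < N := by exact_mod_cast hN
  have hD0 : 0 < D := by rw [hD]; positivity
  have hτc : Continuous τ := by
    refine (LipschitzWith.of_dist_le_mul (K := 1) fun s t => ?_).continuous
    simpa [Real.dist_eq] using hτ s t
  have hσc : Continuous σ := continuous_iff_continuousAt.2 fun x => (hσ x).continuousAt
  have dpos : ∀ x ∈ unitInterval, ∀ k ∈ Finset.range N, D ≤ dk f N k x ∧ dk f N k x ≤ 1 := by
    intro x hx k hk
    rw [hD]
    exact dk_pos hC₁ hβ h (Finset.mem_range.1 hk) hx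
  -- increments
  have inc : ∀ x ∈ unitInterval, ∀ y ∈ unitInterval, ∀ z ∈ unitInterval, y < z →
      p * (z - y) ≤ gI f N σ τ x z - gI f N σ τ x y ∧
      gI f N σ τ x z - gI f N σ τ x y ≤ (2 * N) * (z - y) := by
    intro x hx y hy z hz hyz
    have e1 : N * (z - y) = ∑ k ∈ Finset.range N, (rk N k z - rk N k y) := by
      rw [Finset.sum_sub_distrib, sum_rk hN hz, sum_rk hN hy]; ring
    have e2 : gI f N σ τ x z - gI f N σ τ x y = ∑ k ∈ Finset.range N, dk f N k x *
        ((rk N k z - rk N k y) + σ x * (τ (rk N k z) - τ (rk N k y))) := by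
      unfold gI
      rw [← Finset.sum_sub_distrib]
      exact Finset.sum_congr rfl fun k _ => by ring
    have e3 : ∀ k, (1 - κ) * (rk N k z - rk N k y) ≤
        (rk N k z - rk N k y) + σ x * (τ (rk N k z) - τ (rk N k y)) ∧
        (rk N k z - rk N k y) + σ x * (τ (rk N k z) - τ (rk N k y)) ≤ 2 * (rk N k z - rk N k y) := by
      intro k
      have r0 : 0 ≤ rk N k z - rk N k y := sub_nonneg.2 (rk_mono N k hyz.le)
      have r1 := hτ (rk N k z) (rk N k y)
      rw [abs_of_nonneg r0] at r1
      have r2 : |σ x * (τ (rk N k z) - τ (rk N k y))| ≤ κ * (rk N k z - rk N k y) := by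
        rw [abs_mul]
        exact mul_le_mul (hσκ x hx) r1 (abs_nonneg _) hκ0
      rw [abs_le] at r2
      constructor <;> nlinarith
    rw [e2, hp, mul_assoc ((1 - κ) * D), mul_assoc 2, e1, Finset.mul_sum, Finset.mul_sum]
    constructor
    · refine Finset.sum_le_sum fun k hk => ?_
      have r0 : 0 ≤ rk N k z - rk N k y := sub_nonneg.2 (rk_mono N k hyz.le)
      have := (dpos x hx k hk).1
      have := (e3 k).1
      have : 0 ≤ (1 - κ) * (rk N k z - rk N k y) := mul_nonneg (by linarith) r0
      calc (1 - κ) * D * (rk N k z - rk N k y) = D * ((1 - κ) * (rk N k z - rk N k y)) := by ring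
        _ ≤ _ := mul_le_mul (dpos x hx k hk).1 (e3 k).1 this (hD0.le.trans (dpos x hx k hk).1)
    · refine Finset.sum_le_sum fun k hk => ?_
      have r0 : 0 ≤ rk N k z - rk N k y := sub_nonneg.2 (rk_mono N k hyz.le)
      have d1 := (dpos x hx k hk).1
      have d2 := (dpos x hx k hk).2
      have e4 := (e3 k).1
      have e5 := (e3 k).2
      have : 0 ≤ (1 - κ) * (rk N k z - rk N k y) := mul_nonneg (by linarith) r0
      exact (mul_le_of_le_one_left (this.trans e4) d2).trans e5
  have pp : 0 < p := by
    rw [hp]; have : 0 < 1 - κ := by linarith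
    positivity
  have close : ∀ x ∈ unitInterval, ∀ y,
      |gI f N σ τ x y - ∑ k ∈ Finset.range N, dk f N k x * rk N k y| ≤ ρ / 2 := by
    intro x hx y
    unfold gI
    rw [← Finset.sum_sub_distrib]
    refine (Finset.abs_sum_le_sum_abs _ _).trans ?_
    calc _ ≤ ∑ k ∈ Finset.range N, dk f N k x * (ρ / 2) := by
          refine Finset.sum_le_sum fun k hk => ?_
          have d1 : 0 ≤ dk f N k x := hD0.le.trans (dpos x hx k hk).1
          rw [← mul_sub, add_sub_cancel_left, abs_mul, abs_of_nonneg d1, abs_mul]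
          refine mul_le_mul_of_nonneg_left ?_ d1
          exact (mul_le_of_le_one_left (abs_nonneg _) ((hσκ x hx).trans hκ.le)).trans (hτρ _)
      _ = ρ / 2 := by rw [← Finset.sum_mul, dk_sum h hN hx, one_mul]
  have fin : ∀ x ∈ unitInterval, ∀ y ∈ unitInterval, ∀ z ∈ unitInterval, y < z →
      C⁻¹ * (z - y) ^ (1 / β) ≤ gI f N σ τ x z - gI f N σ τ x y ∧
      gI f N σ τ x z - gI f N σ τ x y ≤ C * (z - y) ^ β := by
    intro x hx y hy z hz hyz
    obtain ⟨l1, l2⟩ := lin_bounds hC₁ hβ hβ1 h hN hx hy hz hyz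
    obtain ⟨i1, i2⟩ := inc x hx y hy z hz hyz
    refine hpatch (z - y) _ _ (sub_pos.2 hyz) l1 l2 i1 i2 ?_
    have c1 := abs_le.1 (close x hx y)
    have c2 := abs_le.1 (close x hx z)
    rw [abs_le]
    constructor <;> linarith [c1.1, c1.2, c2.1, c2.2]
  have pos : ∀ x ∈ unitInterval, ∀ y ∈ unitInterval, ∀ z ∈ unitInterval, y < z →
      0 < gI f N σ τ x z - gI f N σ τ x y := fun x hx y hy z hz hyz =>
    (mul_pos pp (sub_pos.2 hyz)).trans_le (inc x hx y hy z hz hyz).1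
  have h0 : (0:ℝ) ∈ unitInterval := ⟨le_rfl, zero_le_one⟩
  have h1 : (1:ℝ) ∈ unitInterval := ⟨zero_le_one, le_rfl⟩
  have bot : ∀ x ∈ unitInterval, gI f N σ τ x 0 = 0 := by
    intro x hx
    unfold gI
    refine Finset.sum_eq_zero fun k hk => ?_
    have : rk N k 0 = 0 := by
      unfold rk; rw [mul_zero, zero_sub]
      exact max_eq_left ((min_le_right _ _).trans (by simp))
    rw [this, hτ0]; ring
  have top : ∀ x ∈ unitInterval, gI f N σ τ x 1 = 1 := by
    intro x hx
    refine Eq.trans ?_ (dk_sum h hN hx)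
    unfold gI
    refine Finset.sum_congr rfl fun k hk => ?_
    have : rk N k 1 = 1 := by
      have : (k:ℝ) + 1 ≤ N := by exact_mod_cast Finset.mem_range.1 hk
      unfold rk; rw [mul_one, min_eq_left (by linarith)]
      exact max_eq_right zero_le_one
    rw [this, hτ1]; ring
  refine ⟨?_, ?_, ?_, ?_, bot, top, ?_, ?_⟩
  · intro x hx y hy
    constructor
    · rcases hy.1.eq_or_lt with e | e
      · rw [← e, bot x hx]
      · have := pos x hx 0 h0 y hy e
        rw [bot x hx] at this; linarith
    · rcases hy.2.eq_or_lt with e | e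
      · rw [e, top x hx]
      · have := pos x hx y hy 1 h1 e
        rw [top x hx] at this; linarith
  · intro y hy x hx
    unfold gI gIx
    refine HasDerivWithinAt.fun_sum fun k hk => ?_
    have hk' := Finset.mem_range.1 hk
    have e1 : HasDerivWithinAt (fun x => dk f N k x) (dk fx N k x) unitInterval x :=
      (h.hasDeriv _ (node_mem' (show k + 1 ≤ N from hk')) x hx).sub
        (h.hasDeriv _ (node_mem' hk'.le) x hx)
    exact e1.mul (((hσ x).hasDerivWithinAt.mul_const _).const_add _)
  · unfold gIx
    refine continuousOn_finsetSum _ fun k hk => ?_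
    have hk' := Finset.mem_range.1 hk
    have c1 : ∀ q ∈ unitInterval, ContinuousOn (fun p : ℝ × ℝ => fx p.1 q) MSq := by
      intro q hq
      exact h.derivCont.comp (f := fun p : ℝ × ℝ => (p.1, q)) (by fun_prop)
        (fun p hp => ⟨hp.1, hq⟩)
    have c2 : ∀ q ∈ unitInterval, ContinuousOn (fun p : ℝ × ℝ => f p.1 q) MSq := by
      intro q hq
      exact (fol_contx h hq).comp continuousOn_fst (fun p hp => hp.1)
    have m1 := node_mem' hk'.le
    have m2 := node_mem' (show k + 1 ≤ N from hk')
    have c3 : ContinuousOn (fun p : ℝ × ℝ => dk fx N k p.1) MSq := (c1 _ m2).sub (c1 _ m1)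
    have c4 : ContinuousOn (fun p : ℝ × ℝ => dk f N k p.1) MSq := (c2 _ m2).sub (c2 _ m1)
    have c5 : Continuous (fun p : ℝ × ℝ => rk N k p.2) := (rk_cont N k).comp continuous_snd
    have c6 : Continuous (fun p : ℝ × ℝ => σ p.1) := hσc.comp continuous_fst
    have c7 : Continuous (fun p : ℝ × ℝ => σ' p.1) := hσ'.comp continuous_fst
    have c8 : Continuous (fun p : ℝ × ℝ => τ (rk N k p.2)) := hτc.comp c5
    exact (c3.mul (c5.add (c6.mul c8)).continuousOn).add (c4.mul (c7.mul c8).continuousOn)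
  · intro y hy
    unfold gI
    rw [hσ0]
    simp only [zero_mul, add_zero]
    have : ∀ k ∈ Finset.range N, dk f N k 0 * rk N k y = (1 / N) * rk N k y := by
      intro k hk
      have hk' := Finset.mem_range.1 hk
      unfold dk
      rw [h.eq_id _ (node_mem' hk'.le), h.eq_id _ (node_mem' (show k + 1 ≤ N from hk'))]
      push_cast
      ring
    rw [Finset.sum_congr rfl this, ← Finset.mul_sum, sum_rk hN hy]
    field_simp
  · intro x hx y hy z hz hyz
    rcases lt_or_gt_of_ne hyz with hlt | hlt
    · rw [abs_of_pos (sub_pos.2 hlt), abs_of_pos (pos x hx y hy z hz hlt)]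
      exact (fin x hx y hy z hz hlt).1
    · rw [abs_sub_comm, abs_of_pos (sub_pos.2 hlt), abs_sub_comm, abs_of_pos (pos x hx z hz y hy hlt)]
      exact (fin x hx z hz y hy hlt).1
  · intro x hx y hy z hz hyz
    rcases lt_or_gt_of_ne hyz with hlt | hlt
    · rw [abs_of_pos (sub_pos.2 hlt), abs_of_pos (pos x hx y hy z hz hlt)]
      exact (fin x hx y hy z hz hlt).2
    · rw [abs_sub_comm, abs_of_pos (pos x hx z hz y hy hlt), abs_sub_comm, abs_of_pos (sub_pos.2 hlt)]
      exact (fin x hx z hz y hy hlt).2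

lemma gIx_close {C₁ β K S ρ δ : ℝ} {f fx : ℝ → ℝ → ℝ} 
    (h : IsFol C₁ β f fx) {N : ℕ} (hN : 0 < N) {σ σ' τ : ℝ → ℝ}
    (hσκ : ∀ x ∈ unitInterval, |σ x| ≤ 1) (hS : ∀ x ∈ unitInterval, |σ' x| ≤ S)
    (hK : ∀ x ∈ unitInterval, ∀ y ∈ unitInterval, |fx x y| ≤ K)
    (hτρ : ∀ s, |τ s| ≤ ρ)
    (hmod : ∀ x ∈ unitInterval, ∀ y ∈ unitInterval, ∀ z ∈ unitInterval, |y - z| ≤ 1 / N →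
      |fx x y - fx x z| ≤ δ) {x y : ℝ} (hx : x ∈ unitInterval) (hy : y ∈ unitInterval) :
    |gIx f fx N σ σ' τ x y - fx x y| ≤ δ + N * (2 * K + S) * ρ := by
  have hN' : (0:ℝ) < N := by exact_mod_cast hN
  have e1 : |∑ k ∈ Finset.range N, dk fx N k x * rk N k y - fx x y| ≤ δ := by
    obtain ⟨a, ha, s, hs, rfl⟩ := decomp hN hy
    have ea := sum_eval ha hs (fun k => fx x ((k : ℝ) / N)) id rfl rfl
    simp only [id] at ea
    unfold dk
    rw [ea]
    simp only [Nat.cast_zero, zero_div, fol_fx_zero h hx, sub_zero]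
    have m1 := hmod x hx _ (node_mem' ha.le) _ hy (by
      rw [← sub_div, abs_div, abs_of_pos hN']; gcongr
      rw [abs_le]; constructor <;> linarith [hs.1, hs.2])
    have m2 := hmod x hx _ (node_mem' (show a + 1 ≤ N from ha)) _ hy (by
      rw [← sub_div, abs_div, abs_of_pos hN']; gcongr
      push_cast
      rw [abs_le]; constructor <;> linarith [hs.1, hs.2])
    rw [abs_le] at *
    obtain ⟨hs0, hs1⟩ := hs
    constructor <;> nlinarith [m1.1, m1.2, m2.1, m2.2]
  have e2 : |gIx f fx N σ σ' τ x y - ∑ k ∈ Finset.range N, dk fx N k x * rk N k y|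
      ≤ N * (2 * K + S) * ρ := by
    unfold gIx
    rw [← Finset.sum_sub_distrib]
    refine (Finset.abs_sum_le_sum_abs _ _).trans ?_
    calc _ ≤ ∑ k ∈ Finset.range N, (2 * K + S) * ρ := by
          refine Finset.sum_le_sum fun k hk => ?_
          have hk' := Finset.mem_range.1 hk
          have m1 := node_mem' hk'.le
          have m2 := node_mem' (show k + 1 ≤ N from hk')
          have a1 : |dk fx N k x| ≤ 2 * K := by
            have k1 := abs_le.1 (hK x hx _ m1)
            have k2 := abs_le.1 (hK x hx _ m2)
            unfold dk
            rw [abs_le]; constructor <;> linarith [k1.1, k1.2, k2.1, k2.2]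
          have a2 : |dk f N k x| ≤ 1 := by
            have k1 := h.mapsTo x hx _ m1
            have k2 := h.mapsTo x hx _ m2
            unfold dk
            rw [abs_le]; constructor <;> linarith [k1.1, k1.2, k2.1, k2.2]
          have a3 := hτρ (rk N k y)
          have a4 := hσκ x hx
          have a5 := hS x hx
          have hK0 : 0 ≤ 2 * K := (abs_nonneg _).trans a1
          have hS0 : 0 ≤ S := (abs_nonneg _).trans a5
          rw [show dk fx N k x * (rk N k y + σ x * τ (rk N k y)) +
            dk f N k x * (σ' x * τ (rk N k y)) - dk fx N k x * rk N k y =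
            dk fx N k x * σ x * τ (rk N k y) + dk f N k x * σ' x * τ (rk N k y) by ring]
          refine (abs_add_le _ _).trans ?_
          rw [abs_mul, abs_mul, abs_mul, abs_mul]
          calc _ ≤ 2 * K * 1 * ρ + 1 * S * ρ := by gcongr
            _ = _ := by ring
      _ = _ := by rw [Finset.sum_const, Finset.card_range, nsmul_eq_mul]; ring
  rw [abs_le] at *
  constructor <;> linarith [e1.1, e1.2, e2.1, e2.2]

def tau (L : ℕ) (s : ℝ) : ℝ := |(L:ℝ) * s - round ((L:ℝ) * s)| / L

lemma tau_lip {L : ℕ} (hL : 0 < L) (s t : ℝ) : |tau L s - tau L t| ≤ |s - t| := by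
  have hL' : (0:ℝ) < L := by exact_mod_cast hL
  have key : ∀ s t : ℝ, tau L s - tau L t ≤ |s - t| := by
    intro s t
    unfold tau
    rw [← sub_div, div_le_iff₀ hL']
    have h1 := round_le ((L:ℝ) * s) (round ((L:ℝ) * t))
    have h2 := abs_sub_le ((L:ℝ) * s) (L * t) (round ((L:ℝ) * t))
    rw [← mul_sub, abs_mul, abs_of_pos hL'] at h2
    linarith
  rw [abs_le]
  constructor
  · have := key t s; rw [abs_sub_comm] at this; linarith
  · exact key s t

lemma tau_bound {L : ℕ} (hL : 0 < L) (s : ℝ) : |tau L s| ≤ 1 / 2 / L := by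
  unfold tau
  rw [abs_of_nonneg (by positivity)]
  gcongr
  exact abs_sub_round _

lemma tau_even {L : ℕ} (hL : 0 < L) (j : ℕ) : tau L ((2 * j : ℕ) / (2 * L)) = 0 := by
  have hL' : (L:ℝ) ≠ 0 := by exact_mod_cast hL.ne'
  unfold tau
  have : (L:ℝ) * ((2 * j : ℕ) / (2 * L)) = (j : ℝ) := by push_cast; field_simp
  rw [this]; simp

lemma tau_odd {L : ℕ} (hL : 0 < L) (j : ℕ) : tau L ((2 * j + 1 : ℕ) / (2 * L)) = 1 / (2 * L) := by
  have hL' : (L:ℝ) ≠ 0 := by exact_mod_cast hL.ne'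
  unfold tau
  have : (L:ℝ) * ((2 * j + 1 : ℕ) / (2 * L)) = (j : ℝ) + 2⁻¹ := by push_cast; field_simp
  rw [this, abs_sub_round_eq_min, Int.fract_natCast_add]
  have : Int.fract (2⁻¹ : ℝ) = 2⁻¹ := Int.fract_eq_self.2 ⟨by norm_num, by norm_num⟩
  rw [this]; norm_num; field_simp

lemma wid_gI {C β : ℝ} {f fx : ℝ → ℝ → ℝ} (h : IsFol C β f fx) {N₀ M : ℕ} (σ : ℝ → ℝ) {i : ℕ}
    (hi : i < 2 ^ (N₀ + M + 1)) : ∃ a < 2 ^ N₀,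
    (∀ x ∈ unitInterval, wid (gI f (2 ^ N₀) σ (tau (2 ^ M))) (N₀ + M + 1) i x =
      1 / (2 * 2 ^ M) * (dk f (2 ^ N₀) a x * (1 + σ x))) ∨
    (∀ x ∈ unitInterval, wid (gI f (2 ^ N₀) σ (tau (2 ^ M))) (N₀ + M + 1) i x =
      1 / (2 * 2 ^ M) * (dk f (2 ^ N₀) a x * (1 - σ x))) := by
  have hL : 0 < 2 ^ M := by positivity
  set a := i / (2 * 2 ^ M) with ha
  set r := i % (2 * 2 ^ M) with hr
  have hir : i = 2 * 2 ^ M * a + r := (Nat.div_add_mod i _).symm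
  have hr' : r < 2 * 2 ^ M := Nat.mod_lt _ (by positivity)
  have haN : a < 2 ^ N₀ := by
    rw [ha, Nat.div_lt_iff_lt_mul (by positivity)]
    calc i < 2 ^ (N₀ + M + 1) := hi
      _ = _ := by ring
  have hpow : (0:ℝ) < 2 * 2 ^ M := by positivity
  have y1 : (i:ℝ) / 2 ^ (N₀ + M + 1) = ((a:ℝ) + (r:ℕ) / (2 * (2 ^ M : ℕ))) / (2 ^ N₀ : ℕ) := by
    rw [hir]; push_cast; field_simp; ring
  have y2 : ((i:ℝ) + 1) / 2 ^ (N₀ + M + 1)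
      = ((a:ℝ) + (r + 1 : ℕ) / (2 * (2 ^ M : ℕ))) / (2 ^ N₀ : ℕ) := by
    rw [hir]; push_cast; field_simp; ring
  have s1 : (r:ℝ) / (2 * (2 ^ M : ℕ)) ∈ unitInterval := by
    refine ⟨by positivity, div_le_one_of_le₀ ?_ (by positivity)⟩
    exact_mod_cast hr'.le
  have s2 : ((r + 1 : ℕ):ℝ) / (2 * (2 ^ M : ℕ)) ∈ unitInterval := by
    refine ⟨by positivity, div_le_one_of_le₀ ?_ (by positivity)⟩
    exact_mod_cast hr'
  have t0 : tau (2 ^ M) 0 = 0 := by unfold tau; simp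
  have t1 : tau (2 ^ M) 1 = 0 := by
    unfold tau; rw [mul_one, round_natCast]; simp
  have main : ∀ x ∈ unitInterval, wid (gI f (2 ^ N₀) σ (tau (2 ^ M))) (N₀ + M + 1) i x =
      dk f (2 ^ N₀) a x * (1 / (2 * 2 ^ M) + σ x *
        (tau (2 ^ M) ((r + 1 : ℕ) / (2 * (2 ^ M : ℕ))) - tau (2 ^ M) ((r:ℕ) / (2 * (2 ^ M : ℕ))))) := by
    intro x hx
    have f0 : (fun s : ℝ => s + σ x * tau (2 ^ M) s) 0 = 0 := by simp [t0]
    have f1 : (fun s => s + σ x * tau (2 ^ M) s) 1 = 1 := by simp [t1]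
    have q1 := sum_eval haN s1 (fun k => f x ((k : ℝ) / (2 ^ N₀ : ℕ)))
      (fun s : ℝ => s + σ x * tau (2 ^ M) s) f0 f1
    have q2 := sum_eval haN s2 (fun k => f x ((k : ℝ) / (2 ^ N₀ : ℕ)))
      (fun s : ℝ => s + σ x * tau (2 ^ M) s) f0 f1
    unfold wid gI
    rw [y1, y2]
    unfold dk
    rw [q1, q2]
    push_cast
    field_simp
    ring
  refine ⟨a, haN, ?_⟩
  rcases Nat.even_or_odd' r with ⟨j, hj | hj⟩
  · left
    intro x hx
    rw [main x hx, hj, tau_odd hL, tau_even hL]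
    push_cast; ring
  · right
    intro x hx
    rw [main x hx, hj, tau_odd hL, show 2 * j + 1 + 1 = 2 * (j + 1) by ring, tau_even hL]
    push_cast; ring

lemma arct_lim {u : ℝ → ℝ} (hu : Continuous u) {a b : ℝ} (hab : a ≤ b)
    (hpos : ∀ x ∈ Ioo a b, 0 < u x) :
    Tendsto (fun K : ℝ => ∫ x in a..b, (1 - 2 / Real.pi * Real.arctan (K * u x))) atTop (𝓝 0) := by
  have hpi := Real.pi_pos
  have h0 : (0:ℝ) = ∫ x in a..b, (0:ℝ) := by simp
  rw [h0]
  refine intervalIntegral.tendsto_integral_filter_of_dominated_convergence (fun _ => 2) ?_ ?_ ?_ ?_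
  · refine Eventually.of_forall fun K => Continuous.aestronglyMeasurable ?_
    have := Real.continuous_arctan
    fun_prop
  · refine Eventually.of_forall fun K => Eventually.of_forall fun x _ => ?_
    have h1 := Real.arctan_lt_pi_div_two (K * u x)
    have h2 := Real.neg_pi_div_two_lt_arctan (K * u x)
    have e : 2 / Real.pi * (Real.pi / 2) = 1 := by field_simp
    have hq : 0 < 2 / Real.pi := by positivity
    rw [Real.norm_eq_abs, abs_le]
    constructor <;> nlinarith
  · exact intervalIntegrable_const
  · have hne : ∀ᵐ x : ℝ, x ≠ b := by
      rw [ae_iff]; simp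
    filter_upwards [hne] with x hxb hx
    rw [uIoc_of_le hab] at hx
    have hux := hpos x ⟨hx.1, lt_of_le_of_ne hx.2 hxb⟩
    have t1 : Tendsto (fun K : ℝ => K * u x) atTop atTop := tendsto_id.atTop_mul_const hux
    have t2 := (Real.tendsto_arctan_atTop.mono_right nhdsWithin_le_nhds).comp t1
    have t3 := (t2.const_mul (2 / Real.pi)).const_sub 1
    have e : 1 - 2 / Real.pi * (Real.pi / 2) = 0 := by field_simp; ring
    rw [e] at t3
    exact t3

lemma exists_sigma {a b : ℝ} (ha : a ∈ unitInterval) (hb : b ∈ unitInterval) (hab : a ≤ b)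
    {e : ℝ} (he : 0 < e) : ∃ σ σ' : ℝ → ℝ, ∃ κ : ℝ, (∀ x, HasDerivAt σ (σ' x) x) ∧ Continuous σ' ∧
      σ 0 = 0 ∧ 0 ≤ κ ∧ κ < 1 ∧ (∀ x ∈ unitInterval, |σ x| ≤ κ) ∧
      (∫ x in (0:ℝ)..a, (1 + σ x)) ≤ e ∧ (∫ x in a..b, (1 - σ x)) ≤ e ∧
      (∫ x in b..(1:ℝ), (1 + σ x)) ≤ e := by
  have hpi := Real.pi_pos
  obtain ⟨u, hu⟩ : ∃ u : ℝ → ℝ, u = fun x => x * ((x - a) * (b - x)) := ⟨_, rfl⟩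
  have huc : ContDiff ℝ 1 u := by rw [hu]; fun_prop
  have l1 := arct_lim (u := fun x => - u x) huc.continuous.neg ha.1 (by
    intro x hx
    rw [hu]
    have : 0 < x * ((a - x) * (b - x)) :=
      mul_pos hx.1 (mul_pos (by linarith [hx.2]) (by linarith [hx.2]))
    simp only; nlinarith)
  have l2 := arct_lim huc.continuous hab (by
    intro x hx
    rw [hu]
    exact mul_pos (by linarith [hx.1, ha.1]) (mul_pos (by linarith [hx.1]) (by linarith [hx.2])))
  have l3 := arct_lim (u := fun x => - u x) huc.continuous.neg hb.2 (by
    intro x hx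
    rw [hu]
    have : 0 < x * ((x - a) * (x - b)) :=
      mul_pos (by linarith [hx.1, hb.1]) (mul_pos (by linarith [hx.1]) (by linarith [hx.1]))
    simp only; nlinarith)
  obtain ⟨K, ⟨⟨k1, k2⟩, k3⟩, k4⟩ := (((l1.eventually_lt_const he).and (l2.eventually_lt_const he)).and
    (l3.eventually_lt_const he)).and (eventually_ge_atTop (1:ℝ)) |>.exists
  simp only [mul_neg, Real.arctan_neg, sub_neg_eq_add] at k1 k3
  have hsm : ContDiff ℝ 1 (fun x => 2 / Real.pi * Real.arctan (K * u x)) := by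
    refine contDiff_const.mul ?_
    exact ContDiff.arctan (n := 1) (contDiff_const.mul huc)
  refine ⟨fun x => 2 / Real.pi * Real.arctan (K * u x), 
    deriv (fun x => 2 / Real.pi * Real.arctan (K * u x)), 2 / Real.pi * Real.arctan K, ?_, ?_, ?_, ?_,
    ?_, ?_, k1.le, k2.le, k3.le⟩
  · intro x
    exact (hsm.differentiable (by norm_num) x).hasDerivAt
  · exact hsm.continuous_deriv le_rfl
  · simp [hu]
  · have : 0 ≤ Real.arctan K := Real.arctan_nonneg.2 (by linarith)
    positivity
  · have h1 := Real.arctan_lt_pi_div_two K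
    have e : 2 / Real.pi * (Real.pi / 2) = 1 := by field_simp
    have hq : 0 < 2 / Real.pi := by positivity
    nlinarith
  · intro x hx
    have hux : |u x| ≤ 1 := by
      rw [hu]
      have p1 : |x - a| ≤ 1 := by rw [abs_le]; constructor <;> linarith [hx.1, hx.2, ha.1, ha.2]
      have p2 : |b - x| ≤ 1 := by rw [abs_le]; constructor <;> linarith [hx.1, hx.2, hb.1, hb.2]
      have p3 : |x| ≤ 1 := by rw [abs_le]; constructor <;> linarith [hx.1, hx.2]
      simp only [abs_mul]
      exact mul_le_one₀ p3 (by positivity) (mul_le_one₀ p1 (by positivity) p2)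
    rw [abs_le] at hux
    have q1 : Real.arctan (K * u x) ≤ Real.arctan K := Real.arctan_le_arctan_iff.2 (by nlinarith)
    have q2 : -Real.arctan K ≤ Real.arctan (K * u x) := by
      rw [← Real.arctan_neg]; exact Real.arctan_le_arctan_iff.2 (by nlinarith)
    rw [abs_mul, abs_of_pos (show 0 < 2 / Real.pi by positivity)]
    gcongr
    exact abs_le.2 ⟨q2, q1⟩

/-- weighted integral comparison -/
lemma int_comp {a b D : ℝ} {d s : ℝ → ℝ} (ha : a ∈ unitInterval) (hb : b ∈ unitInterval)
    (hab : a ≤ b) (hd : ContinuousOn d unitInterval) (hs : ContinuousOn s unitInterval)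
    (hd1 : ∀ x ∈ unitInterval, D ≤ d x ∧ d x ≤ 1) (hs0 : ∀ x ∈ unitInterval, 0 ≤ s x) :
    D * (∫ x in a..b, s x) ≤ (∫ x in a..b, d x * s x) ∧
    (∫ x in a..b, d x * s x) ≤ ∫ x in a..b, s x := by
  have hsub : uIcc a b ⊆ unitInterval := uIcc_subset_Icc ha hb
  have hsub' : Icc a b ⊆ unitInterval := Icc_subset_Icc ha.1 hb.2
  have i1 : IntervalIntegrable s volume a b := (hs.mono hsub).intervalIntegrable
  have i2 : IntervalIntegrable (fun x => d x * s x) volume a b :=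
    ((hd.mul hs).mono hsub).intervalIntegrable
  constructor
  · rw [← intervalIntegral.integral_const_mul]
    refine intervalIntegral.integral_mono_on hab (i1.const_mul D) i2 fun x hx => ?_
    exact mul_le_mul_of_nonneg_right (hd1 x (hsub' hx)).1 (hs0 x (hsub' hx))
  · refine intervalIntegral.integral_mono_on hab i2 i1 fun x hx => ?_
    exact mul_le_of_le_one_left (hs0 x (hsub' hx)) (hd1 x (hsub' hx)).2

/-- the ratio estimates -/
lemma ratio_est {a b D e c : ℝ} {m : ℕ} {d σ w : ℝ → ℝ} (ha : a ∈ unitInterval)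
    (hb : b ∈ unitInterval) (hab : a ≤ b) (hd : ContinuousOn d unitInterval)
    (hσ : Continuous σ) (hσ1 : ∀ x ∈ unitInterval, |σ x| ≤ 1) (hD : 0 < D) (he : 0 < e)
    (hd1 : ∀ x ∈ unitInterval, D ≤ d x ∧ d x ≤ 1)
    (h1 : (∫ x in (0:ℝ)..a, (1 + σ x)) ≤ e) (h2 : (∫ x in a..b, (1 - σ x)) ≤ e)
    (h3 : (∫ x in b..(1:ℝ), (1 + σ x)) ≤ e) (hc : 0 < c)
    (he1 : e * (2 * m + 2 * D) < 2 * D * (b - a)) (he2 : e * (2 * m + 2 * D) < 2 * D * (1 - (b - a)))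
    (hw : (∀ x ∈ unitInterval, w x = c * (d x * (1 + σ x))) ∨
      (∀ x ∈ unitInterval, w x = c * (d x * (1 - σ x)))) :
    m * (∫ x in a..b, w x) < ∫ x in (0:ℝ)..1, w x ∨
      m * ((∫ x in (0:ℝ)..1, w x) - ∫ x in a..b, w x) < ∫ x in (0:ℝ)..1, w x := by
  have u0 : (0:ℝ) ∈ unitInterval := ⟨le_rfl, zero_le_one⟩
  have u1 : (1:ℝ) ∈ unitInterval := ⟨zero_le_one, le_rfl⟩
  have hm0 : (0:ℝ) ≤ m := by positivity
  have main : ∀ s : ℝ → ℝ, ContinuousOn s unitInterval → (∀ x ∈ unitInterval, 0 ≤ s x) →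
      (∀ x ∈ unitInterval, w x = c * (d x * s x)) →
      (D * (∫ x in a..b, s x) ≤ (∫ x in a..b, w x) / c ∧ (∫ x in a..b, w x) / c ≤ ∫ x in a..b, s x) ∧
      (D * ((∫ x in (0:ℝ)..a, s x) + ∫ x in b..1, s x) ≤
        ((∫ x in (0:ℝ)..1, w x) - ∫ x in a..b, w x) / c ∧
       ((∫ x in (0:ℝ)..1, w x) - ∫ x in a..b, w x) / c ≤
        (∫ x in (0:ℝ)..a, s x) + ∫ x in b..1, s x) := by
    intro s hs hs0 hws
    have ev : ∀ p ∈ unitInterval, ∀ q ∈ unitInterval,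
        (∫ x in p..q, w x) = c * ∫ x in p..q, d x * s x := by
      intro p hp q hq
      rw [← intervalIntegral.integral_const_mul]
      exact intervalIntegral.integral_congr fun x hx => hws x (uIcc_subset_Icc hp hq hx)
    have ii : ∀ p ∈ unitInterval, ∀ q ∈ unitInterval,
        IntervalIntegrable (fun x => d x * s x) volume p q := fun p hp q hq =>
      ((hd.mul hs).mono (uIcc_subset_Icc hp hq)).intervalIntegrable
    have split : (∫ x in (0:ℝ)..1, d x * s x) = (∫ x in (0:ℝ)..a, d x * s x) +
        (∫ x in a..b, d x * s x) + ∫ x in b..1, d x * s x := by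
      rw [intervalIntegral.integral_add_adjacent_intervals (ii 0 u0 a ha) (ii a ha b hb),
        intervalIntegral.integral_add_adjacent_intervals (ii 0 u0 b hb) (ii b hb 1 u1)]
    have c1 := int_comp u0 ha ha.1 hd hs hd1 hs0
    have c2 := int_comp ha hb hab hd hs hd1 hs0
    have c3 := int_comp hb u1 hb.2 hd hs hd1 hs0
    rw [ev a ha b hb, ev 0 u0 1 u1, ← mul_sub, mul_div_cancel_left₀ _ hc.ne',
      mul_div_cancel_left₀ _ hc.ne', split]
    refine ⟨c2, ?_, ?_⟩
    · linarith [c1.1, c3.1]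
    · linarith [c1.2, c3.2]
  have ci : ∀ p q, IntervalIntegrable σ volume p q := fun p q => hσ.intervalIntegrable p q
  have cc : ∀ p q : ℝ, IntervalIntegrable (fun _ : ℝ => (1:ℝ)) volume p q :=
    fun p q => intervalIntegrable_const
  have flip : ∀ p q, (∫ x in p..q, (1 + σ x)) + (∫ x in p..q, (1 - σ x)) = 2 * (q - p) := by
    intro p q
    rw [intervalIntegral.integral_add (cc p q) (ci p q),
      intervalIntegral.integral_sub (cc p q) (ci p q)]
    simp; ring
  rcases hw with hw | hw
  · right
    obtain ⟨⟨A1, A2⟩, B1, B2⟩ := main (fun x => 1 + σ x) (continuous_const.add hσ).continuousOn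
      (fun x hx => by have := abs_le.1 (hσ1 x hx); linarith) hw
    have f := flip a b
    set A := ∫ x in a..b, w x
    set T := ∫ x in (0:ℝ)..1, w x
    have k1 : (T - A) / c ≤ 2 * e := by linarith
    have k2 : D * (2 * (b - a) - e) ≤ A / c := le_trans (by gcongr; linarith) A1
    have k3 : 0 ≤ (T - A) / c := le_trans (mul_nonneg hD.le (add_nonneg
      (intervalIntegral.integral_nonneg ha.1 fun x hx => by
        have := abs_le.1 (hσ1 x ⟨hx.1, hx.2.trans ha.2⟩); linarith)
      (intervalIntegral.integral_nonneg hb.2 fun x hx => by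
        have := abs_le.1 (hσ1 x ⟨hb.1.trans hx.1, hx.2⟩); linarith))) B1
    have k4 : m * ((T - A) / c) ≤ m * (2 * e) := by gcongr
    have k5 : m * ((T - A) / c) < A / c := by nlinarith
    rw [mul_div_assoc', div_lt_div_iff_of_pos_right hc] at k5
    have : 0 ≤ T - A := by rwa [le_div_iff₀ hc, zero_mul] at k3
    linarith
  · left
    obtain ⟨⟨A1, A2⟩, B1, B2⟩ := main (fun x => 1 - σ x) (continuous_const.sub hσ).continuousOn
      (fun x hx => by have := abs_le.1 (hσ1 x hx); linarith) hw
    have f1 := flip 0 a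
    have f2 := flip b 1
    set A := ∫ x in a..b, w x
    set T := ∫ x in (0:ℝ)..1, w x
    have k1 : A / c ≤ e := by linarith
    have k2 : D * (2 * (1 - (b - a)) - 2 * e) ≤ (T - A) / c := le_trans (by gcongr; linarith) B1
    have k3 : 0 ≤ A / c := le_trans (mul_nonneg hD.le 
      (intervalIntegral.integral_nonneg hab fun x hx => by
        have := abs_le.1 (hσ1 x ⟨ha.1.trans hx.1, hx.2.trans hb.2⟩); linarith)) A1
    have k4 : m * (A / c) ≤ m * e := by gcongr
    have k4' : 0 ≤ m * e := by positivity
    have k5 : m * (A / c) < (T - A) / c := by nlinarith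
    rw [mul_div_assoc', div_lt_div_iff_of_pos_right hc] at k5
    have : 0 ≤ A := by rwa [le_div_iff₀ hc, zero_mul] at k3
    linarith

lemma dense_part {C β α : ℝ} (hC : 1 < C) (hα : 0 ≤ α) (hαβ : α < β) (hβ1 : β < 1)
    {m : ℕ} (hm : 1 ≤ m) {a b : ℝ}
    (ha : a ∈ unitInterval) (hb : b ∈ unitInterval) (hab : a ≤ b) :
    IsDenseWrt (fun F G : Fol C β => dalphaF α F G) (Bset C β m a b) := by
  intro F ε hε
  have hβ : 0 < β := hα.trans_lt hαβ
  have hC0 : 0 < C := by linarith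
  obtain ⟨δ, hδ, hdist⟩ := dist_small hC0 hα hαβ hε
  have u0 : (0:ℝ) ∈ unitInterval := ⟨le_rfl, zero_le_one⟩
  have u1 : (1:ℝ) ∈ unitInterval := ⟨zero_le_one, le_rfl⟩
  -- degenerate cases
  have self : dalphaF α F F < ε := hdist F F fun x _ y _ => by simpa using hδ.le
  rcases hab.eq_or_lt with hab0 | hab0
  · refine ⟨F, ?_, self⟩
    simp only [Bset, mem_iUnion]
    refine ⟨0, (mem_Aset_iff hC0 hβ hm ha hb hab F).2 fun i hi => Or.inl ?_⟩
    rw [hab0, intervalIntegral.integral_same, mul_zero]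
    exact T_pos hC0 hβ F.isFol hi
  by_cases hfull : b - a = 1
  · have ea : a = 0 := by linarith [ha.1, hb.2]
    have eb : b = 1 := by linarith
    refine ⟨F, ?_, self⟩
    simp only [Bset, mem_iUnion]
    refine ⟨0, (mem_Aset_iff hC0 hβ hm ha hb hab F).2 fun i hi => Or.inr ?_⟩
    rw [ea, eb, sub_self, mul_zero]
    exact T_pos hC0 hβ F.isFol hi
  have hℓ : 0 < b - a := sub_pos.2 hab0
  have hℓ1 : 0 < 1 - (b - a) := by
    have : b - a ≤ 1 := by linarith [ha.1, hb.2]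
    exact sub_pos.2 (lt_of_le_of_ne this hfull)
  -- slack
  obtain ⟨C₁, f, fx, hC₁, hCC, hf, hf1⟩ := slack hC hβ hβ1 F.isFol (show 0 < δ / 3 by positivity)
  obtain ⟨K, hK0, hK⟩ := fx_bound hf
  -- uniform continuity
  have huc := (isCompact_Icc.prod isCompact_Icc : IsCompact MSq).uniformContinuousOn_of_continuous
    hf.derivCont
  rw [Metric.uniformContinuousOn_iff_le] at huc
  obtain ⟨η, hη, huc⟩ := huc (δ / 3) (by positivity)
  obtain ⟨N₀, hN₀⟩ := exists_pow_lt_of_lt_one hη (show (1/2:ℝ) < 1 by norm_num)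
  obtain ⟨N, hN⟩ : ∃ N, N = 2 ^ N₀ := ⟨_, rfl⟩
  have hNpos : 0 < N := by rw [hN]; positivity
  have hN' : (0:ℝ) < N := by exact_mod_cast hNpos
  have hNη : (1:ℝ) / N ≤ η := by
    rw [hN]; push_cast; rw [← one_div_pow]; exact hN₀.le
  have hmod : ∀ x ∈ unitInterval, ∀ y ∈ unitInterval, ∀ z ∈ unitInterval, |y - z| ≤ 1 / N →
      |fx x y - fx x z| ≤ δ / 3 := by
    intro x hx y hy z hz hyz
    refine huc (x, y) ⟨hx, hy⟩ (x, z) ⟨hx, hz⟩ ?_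
    rw [Prod.dist_eq, dist_self, Real.dist_eq]
    exact max_le hη.le (hyz.trans hNη)
  obtain ⟨D, hD⟩ : ∃ D : ℝ, D = C₁⁻¹ * (1 / N : ℝ) ^ (1 / β) := ⟨_, rfl⟩
  have hD0 : 0 < D := by rw [hD]; positivity
  -- sigma
  obtain ⟨e, he, he1, he2⟩ : ∃ e : ℝ, 0 < e ∧ e * (2 * m + 2 * D) < 2 * D * (b - a) ∧
      e * (2 * m + 2 * D) < 2 * D * (1 - (b - a)) := by
    refine ⟨D * min (b - a) (1 - (b - a)) / (2 * m + 2 * D), by positivity, ?_, ?_⟩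
    · rw [div_mul_cancel₀ _ (by positivity)]
      have := min_le_left (b - a) (1 - (b - a))
      nlinarith [mul_pos hD0 hℓ]
    · rw [div_mul_cancel₀ _ (by positivity)]
      have := min_le_right (b - a) (1 - (b - a))
      nlinarith [mul_pos hD0 hℓ1]
  obtain ⟨σ, σ', κ, hσ, hσ', hσ0, hκ0, hκ, hσκ, i1, i2, i3⟩ := exists_sigma ha hb hab he
  have hσc : Continuous σ := continuous_iff_continuousAt.2 fun x => (hσ x).continuousAt
  have hσ1 : ∀ x ∈ unitInterval, |σ x| ≤ 1 := fun x hx => (hσκ x hx).trans hκ.le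
  obtain ⟨S, hS⟩ := (isCompact_Icc : IsCompact unitInterval).exists_bound_of_continuousOn
    hσ'.continuousOn
  have hS0 : 0 ≤ S := (norm_nonneg _).trans (hS 0 u0)
  -- patch
  have hp : 0 < (1 - κ) * D * N := by
    have : 0 < 1 - κ := by linarith
    positivity
  obtain ⟨ρ, hρ, hpatch⟩ := patch hC₁ hCC hβ hβ1 hp (show (0:ℝ) < 2 * N by positivity)
  -- fine scale
  have hQ : 0 < N * (2 * K + S) + 1 := by positivity
  obtain ⟨M, hM⟩ := exists_pow_lt_of_lt_one
    (show 0 < min ρ (δ / 3 / (N * (2 * K + S) + 1)) by positivity) (show (1/2:ℝ) < 1 by norm_num)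
  have hL : 0 < 2 ^ M := by positivity
  have hτb : ∀ s, |tau (2 ^ M) s| ≤ 1 / 2 * (1/2:ℝ) ^ M := by
    intro s
    have := tau_bound hL s
    push_cast at this
    rwa [div_eq_mul_one_div, ← one_div_pow] at this
  have hpw : (0:ℝ) < (1/2:ℝ) ^ M := by positivity
  have hτ1 : ∀ s, |tau (2 ^ M) s| ≤ ρ / 2 := fun s => by
    have := hτb s
    have := hM.trans_le (min_le_left _ _)
    linarith
  have hτ2 : ∀ s, |tau (2 ^ M) s| ≤ δ / 3 / (N * (2 * K + S) + 1) := fun s => by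
    have := hτb s
    have := hM.trans_le (min_le_right _ _)
    linarith
  have t0 : tau (2 ^ M) 0 = 0 := by unfold tau; simp
  have t1 : tau (2 ^ M) 1 = 0 := by
    unfold tau; rw [mul_one, round_natCast]; simp
  have hg : IsFol C β (gI f N σ (tau (2 ^ M))) (gIx f fx N σ σ' (tau (2 ^ M))) :=
    gI_isFol hC₁ hβ hβ1 hf hNpos hσ hσ' hσ0 hκ0 hκ hσκ t0 t1 (tau_lip hL) hτ1 hD rfl hpatch
  refine ⟨⟨_, _, hg⟩, ?_, ?_⟩
  · simp only [Bset, mem_iUnion]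
    refine ⟨N₀ + M + 1, (mem_Aset_iff hC0 hβ hm ha hb hab _).2 fun i hi => ?_⟩
    obtain ⟨k, hk, hw⟩ := wid_gI hf σ hi
    rw [← hN] at hk hw
    refine ratio_est (d := dk f N k) (c := 1 / (2 * 2 ^ M)) ha hb hab ?_ hσc hσ1 hD0 he ?_ i1 i2 i3
      (by positivity) he1 he2 hw
    · exact (fol_contx hf (node_mem' (show k + 1 ≤ N from hk))).sub (fol_contx hf (node_mem' hk.le))
    · intro x hx
      rw [hD]
      exact dk_pos hC₁ hβ hf hk hx
  · refine hdist _ _ fun x hx y hy => ?_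
    have q1 := gIx_close hf hNpos hσ1 hS hK hτ2 hmod hx hy
    have q2 := hf1 x hx y hy
    have q3 : N * (2 * K + S) * (δ / 3 / (N * (2 * K + S) + 1)) ≤ δ / 3 := by
      rw [mul_div_assoc', div_le_iff₀ hQ]
      nlinarith
    have := abs_sub_le (gIx f fx N σ σ' (tau (2 ^ M)) x y) (fx x y) (F.fx x y)
    simp only
    linarith

/-- For every `m ≥ 1` and every closed interval `I = [b₁,b₂] ⊆ [0,1]` with
rational endpoints, the set `B_{m,I} = ⋃ₙ A_{n,m,I}` is open and dense in `(F_(C,β), d_α)`. -/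
theorem stmt10 (C β α : ℝ) (hC : 1 < C) (hα : 0 ≤ α) (hαβ : α < β) (hβ : β < 1)
    (m : ℕ) (hm : 1 ≤ m) (b₁ b₂ : ℚ)
    (hb₁ : 0 ≤ b₁) (hb : b₁ ≤ b₂) (hb₂ : b₂ ≤ 1) :
    IsOpenWrt (fun F G : Fol C β => dalphaF α F G) (Bset C β m (b₁ : ℝ) (b₂ : ℝ)) ∧
    IsDenseWrt (fun F G : Fol C β => dalphaF α F G) (Bset C β m (b₁ : ℝ) (b₂ : ℝ)) := by
  have h1 : (b₁ : ℝ) ∈ unitInterval := ⟨by exact_mod_cast hb₁, by exact_mod_cast hb.trans hb₂⟩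
  have h2 : (b₂ : ℝ) ∈ unitInterval := ⟨by exact_mod_cast hb₁.trans hb, by exact_mod_cast hb₂⟩
  have h3 : (b₁ : ℝ) ≤ b₂ := by exact_mod_cast hb
  exact ⟨open_part (by linarith) (hα.trans_lt hαβ) hm h1 h2 h3, dense_part hC hα hαβ hβ hm h1 h2 h3⟩

end
end

section
/- Let 0<β<1, C>1 and r>0. Let g : (−r, 1+r) → ℝ be monotone increasing and satisfy C^{-1}|y₂−y₁|^{1/β} ≤ |g(y₂)−g(y₁)| ≤ C|y₂−y₁|^β for all y₁,y₂ ∈ (−r,1+r). Let φ : ℝ → [0,∞) be continuous, vanishing outside (−r,r), with ∫_ℝ φ(t)dt = 1, and define g₂(y) = ∫_{−r}^{r} g(y−t)φ(t)dt for y ∈ [0,1]. Then: (a) C^{-1}|y₂−y₁|^{1/β} ≤ |g₂(y₂)−g₂(y₁)| ≤ C|y₂−y₁|^β for all y₁,y₂ ∈ [0,1]; and (b) |g₂(y)−g(y)| ≤ C r^β for all y ∈ [0,1]. -/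
open MeasureTheory Set Filter Topology
open scoped ENNReal

noncomputable section

/-- Mollifying a monotone `(C,β)`-bi-Hölder function `g` on `(−r, 1+r)` by
convolution with a continuous probability bump function `φ` supported in `(−r,r)` yields
`g₂(y) = ∫_{−r}^{r} g(y−t)φ(t) dt` which (a) is again `(C,β)`-bi-Hölder on `[0,1]`, and
(b) satisfies `|g₂(y) − g(y)| ≤ C r^β` on `[0,1]`. -/
theorem stmt12 (C β r : ℝ) (hC : 1 < C) (hβ0 : 0 < β) (hβ : β < 1) (hr : 0 < r)
    (g : ℝ → ℝ) (hmono : MonotoneOn g (Ioo (-r) (1 + r)))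
    (hlow : ∀ y₁ ∈ Ioo (-r) (1 + r), ∀ y₂ ∈ Ioo (-r) (1 + r),
      C⁻¹ * |y₂ - y₁| ^ (1 / β) ≤ |g y₂ - g y₁|)
    (hupp : ∀ y₁ ∈ Ioo (-r) (1 + r), ∀ y₂ ∈ Ioo (-r) (1 + r),
      |g y₂ - g y₁| ≤ C * |y₂ - y₁| ^ β)
    (φ : ℝ → ℝ) (hφc : Continuous φ) (hφ0 : ∀ t, 0 ≤ φ t)
    (hφsupp : ∀ t ∉ Ioo (-r) r, φ t = 0)
    (hφint : ∫ t, φ t = 1)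
    (g₂ : ℝ → ℝ) (hg₂ : ∀ y, g₂ y = ∫ t in (-r)..r, g (y - t) * φ t) :
    (∀ y₁ ∈ unitInterval, ∀ y₂ ∈ unitInterval,
      C⁻¹ * |y₂ - y₁| ^ (1 / β) ≤ |g₂ y₂ - g₂ y₁| ∧
      |g₂ y₂ - g₂ y₁| ≤ C * |y₂ - y₁| ^ β) ∧
    (∀ y ∈ unitInterval, |g₂ y - g y| ≤ C * r ^ β) := by
  have hφi : IntegrableOn φ (Ioo (-r) r) :=
    (hφc.integrableOn_Icc (a := -r) (b := r)).mono_set Ioo_subset_Icc_self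
  have hφ1 : ∫ t in Ioo (-r) r, φ t = 1 := by
    rw [← hφint]
    exact setIntegral_eq_integral_of_forall_compl_eq_zero hφsupp
  have hG : ∀ y, g₂ y = ∫ t in Ioo (-r) r, g (y - t) * φ t := by
    intro y
    rw [hg₂, intervalIntegral.integral_of_le (by linarith), integral_Ioc_eq_integral_Ioo]
  have hmem : ∀ y ∈ unitInterval, ∀ t ∈ Ioo (-r) r, y - t ∈ Ioo (-r) (1 + r) := by
    intro y hy t ht
    exact ⟨by linarith [hy.1, ht.2], by linarith [hy.2, ht.1]⟩
  have hmem0 : ∀ y ∈ unitInterval, y ∈ Ioo (-r) (1 + r) := by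
    intro y hy
    exact ⟨by linarith [hy.1], by linarith [hy.2]⟩
  have hclose : ∀ y ∈ unitInterval, ∀ t ∈ Ioo (-r) r, |g (y - t) - g y| ≤ C * r ^ β := by
    intro y hy t ht
    refine (hupp y (hmem0 y hy) (y - t) (hmem y hy t ht)).trans ?_
    have h1 : |y - t - y| ≤ r := abs_le.2 ⟨by linarith [ht.2], by linarith [ht.1]⟩
    exact mul_le_mul_of_nonneg_left
      (Real.rpow_le_rpow (abs_nonneg _) h1 hβ0.le) (by linarith)
  have hint : ∀ y ∈ unitInterval, IntegrableOn (fun t => g (y - t) * φ t) (Ioo (-r) r) := by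
    intro y hy
    have hanti : AntitoneOn (fun t => g (y - t)) (Ioo (-r) r) := by
      intro s hs t ht hst
      exact hmono (hmem y hy t ht) (hmem y hy s hs) (by linarith)
    have hm : AEMeasurable (fun t => g (y - t)) (volume.restrict (Ioo (-r) r)) :=
      aemeasurable_restrict_of_antitoneOn measurableSet_Ioo hanti
    refine Integrable.bdd_mul (c := |g y| + C * r ^ β) hφi hm.aestronglyMeasurable ?_
    refine (ae_restrict_iff' measurableSet_Ioo).2 (Eventually.of_forall fun t ht => ?_)
    have h := hclose y hy t ht
    have h2 := abs_add_le (g y) (g (y - t) - g y)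
    rw [add_sub_cancel] at h2
    rw [Real.norm_eq_abs]
    linarith
  have key : ∀ (h : ℝ → ℝ) (a b : ℝ), IntegrableOn (fun t => h t * φ t) (Ioo (-r) r) →
      (∀ t ∈ Ioo (-r) r, a ≤ h t ∧ h t ≤ b) →
      a ≤ (∫ t in Ioo (-r) r, h t * φ t) ∧ (∫ t in Ioo (-r) r, h t * φ t) ≤ b := by
    intro h a b hi hab
    have e : ∀ c : ℝ, ∫ t in Ioo (-r) r, c * φ t = c := by
      intro c
      rw [integral_const_mul, hφ1, mul_one]
    constructor
    · conv_lhs => rw [← e a]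
      exact setIntegral_mono_on (hφi.const_mul a) hi measurableSet_Ioo
        fun t ht => mul_le_mul_of_nonneg_right (hab t ht).1 (hφ0 t)
    · conv_rhs => rw [← e b]
      exact setIntegral_mono_on hi (hφi.const_mul b) measurableSet_Ioo
        fun t ht => mul_le_mul_of_nonneg_right (hab t ht).2 (hφ0 t)
  have main : ∀ y₁ ∈ unitInterval, ∀ y₂ ∈ unitInterval, y₁ ≤ y₂ →
      C⁻¹ * |y₂ - y₁| ^ (1 / β) ≤ |g₂ y₂ - g₂ y₁| ∧
      |g₂ y₂ - g₂ y₁| ≤ C * |y₂ - y₁| ^ β := by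
    intro y₁ h₁ y₂ h₂ hle
    have hd : g₂ y₂ - g₂ y₁ = ∫ t in Ioo (-r) r, (g (y₂ - t) - g (y₁ - t)) * φ t := by
      rw [hG, hG, ← integral_sub (hint y₂ h₂) (hint y₁ h₁)]
      simp only [sub_mul]
    have hk := key (fun t => g (y₂ - t) - g (y₁ - t)) (C⁻¹ * |y₂ - y₁| ^ (1 / β))
      (C * |y₂ - y₁| ^ β)
      (by simp only [sub_mul]; exact (hint y₂ h₂).sub (hint y₁ h₁))
      (by
        intro t ht
        have m₁ := hmem y₁ h₁ t ht
        have m₂ := hmem y₂ h₂ t ht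
        have hn : 0 ≤ g (y₂ - t) - g (y₁ - t) := sub_nonneg.2 (hmono m₁ m₂ (by linarith))
        have hl := hlow _ m₁ _ m₂
        have hu := hupp _ m₁ _ m₂
        rw [abs_of_nonneg hn, sub_sub_sub_cancel_right] at hl hu
        exact ⟨hl, hu⟩)
    rw [← hd] at hk
    have h0 : 0 ≤ C⁻¹ * |y₂ - y₁| ^ (1 / β) := by
      have : 0 < C := by linarith
      positivity
    rw [abs_of_nonneg (h0.trans hk.1)]
    exact hk
  refine ⟨?_, ?_⟩
  · intro y₁ h₁ y₂ h₂
    rcases le_total y₁ y₂ with h | h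
    · exact main y₁ h₁ y₂ h₂ h
    · rw [abs_sub_comm y₂ y₁, abs_sub_comm (g₂ y₂)]
      exact main y₂ h₂ y₁ h₁ h
  · intro y hy
    have hk := key (fun t => g (y - t)) (g y - C * r ^ β) (g y + C * r ^ β) (hint y hy)
      (by
        intro t ht
        have := abs_le.1 (hclose y hy t ht)
        exact ⟨by linarith, by linarith⟩)
    rw [← hG] at hk
    exact abs_le.2 ⟨by linarith [hk.1], by linarith [hk.2]⟩
end
end
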